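/- arXiv:2206.10723 — 4 statements merged into one kernel-verified Lean document; each statement's English description precedes it below -/
import Mathlib

section
/- Let h₁ and h₂ be regularly varying functions on (0,∞) with indices α₁ and α₂ respectively, where α₁ > α₂ ≥ 0. Then for every c ∈ ℝ there exists m₀ > −c such that for every m ≥ m₀, one has sup_{x ≥ mR} h₁(x + cR)/h₂(x) ∼ h₁((m+c)R)/h₂(mR) as R → ∞. -/
open Filter

/-- A function `L` is slowly varying (at infinity) if it is continuous and strictly positive
on `(0,∞)` and `L(ax)/L(x) → 1` as `x → ∞` for every `a > 0`. -/
def SlowlyVarying (L : ℝ → ℝ) : Prop :=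
  ContinuousOn L (Set.Ioi 0) ∧ (∀ x : ℝ, 0 < x → 0 < L x) ∧
    ∀ a : ℝ, 0 < a → Tendsto (fun x => L (a * x) / L x) atTop (nhds 1)

/-- A continuous function `h` on `(0,∞)` is regularly varying (at infinity) with index `α`
if `h(x) ∼ x^(-α) L(x)` as `x → ∞` for some slowly varying `L`. -/
def RegularlyVarying (h : ℝ → ℝ) (α : ℝ) : Prop :=
  ContinuousOn h (Set.Ioi 0) ∧
    ∃ L : ℝ → ℝ, SlowlyVarying L ∧
      Tendsto (fun x => h x / (x ^ (-α) * L x)) atTop (nhds 1)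

/-!
On the logarithmic scale `l t = log (L (exp t))` slow variation says that the increments
`l (t + u) - l t` vanish at infinity for each fixed `u`. By Baire's theorem this is uniform for
`u` in some short interval, and chaining short steps yields Potter's bound
`|log (L y) - log (L x)| ≤ ε + δ (log y - log x)` for all large `x ≤ y`.

Up to a factor close to `1`, the quotient `h₁ (x + cR) / h₂ x` divided by its value at `x = mR`
is therefore at most the corresponding quotient with `h₁ x = x ^ (-A)` and `h₂ x = x ^ (-B)`, where
`A = α₁ - δ` and `B = α₂ + δ`. That quotient is decreasing on `[mR, ∞)` once `B (m + c) ≤ A m`,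
so the supremum is asymptotically attained at the left endpoint.
-/

open Real Set
open scoped Topology

section Increments

variable {M : Type*} [PseudoMetricSpace M] {f : ℝ → M} {ε : ℝ}

lemma exists_eventually_forall_mem_Icc_dist_add_le (hf : Continuous f)
    (hinc : ∀ u, Tendsto (fun x => dist (f (x + u)) (f x)) atTop (𝓝 0)) (hε : 0 < ε) :
    ∃ η > 0, ∀ᶠ x in atTop, ∀ v ∈ Icc 0 η, dist (f (x + v)) (f x) ≤ ε := by
  let A (n : ℕ) : Set ℝ := {u | ∀ x : ℝ, n ≤ x → dist (f (x + u)) (f x) ≤ ε / 2}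
  have hA_closed (n : ℕ) : IsClosed (A n) := by
    simp only [A, ofPred_forall]
    exact isClosed_iInter fun x => isClosed_iInter fun _ =>
      isClosed_le (by fun_prop) continuous_const
  have hA_cover : ⋃ n, A n = univ := by
    refine eq_univ_of_forall fun u => ?_
    obtain ⟨X, hX⟩ := eventually_atTop.1 ((hinc u).eventually_le_const (half_pos hε))
    obtain ⟨n, hn⟩ := exists_nat_ge X
    exact mem_iUnion.2 ⟨n, fun x hx => hX x (hn.trans hx)⟩
  obtain ⟨n, a, ha⟩ := nonempty_interior_of_iUnion_of_closed hA_closed hA_cover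
  obtain ⟨r, hr, hball⟩ := Metric.mem_nhds_iff.1 (mem_interior_iff_mem_nhds.1 ha)
  refine ⟨r / 2, half_pos hr, ?_⟩
  filter_upwards [eventually_ge_atTop (n + a)] with x hx v ⟨hv_nonneg, hv_le⟩
  have hav : a + v ∈ A n := hball <| by
    rw [Metric.mem_ball, dist_self_add_left, Real.norm_of_nonneg hv_nonneg]
    linarith
  have hdist_av := hav (x - a) (by linarith)
  have hdist_a := hball (Metric.mem_ball_self hr) (x - a) (by linarith)
  rw [← add_assoc, sub_add_cancel] at hdist_av
  rw [sub_add_cancel] at hdist_a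
  linarith [dist_triangle_right (f (x + v)) (f x) (f (x - a))]

lemma dist_add_nat_mul_le {X η : ℝ} (hη : 0 ≤ η)
    (hstep : ∀ x, X ≤ x → dist (f (x + η)) (f x) ≤ ε) {x : ℝ} (hx : X ≤ x) (k : ℕ) :
    dist (f (x + k * η)) (f x) ≤ k * ε := by
  have hsum := dist_le_range_sum_of_dist_le (f := fun j : ℕ => f (x + j * η)) k
    (d := fun _ => ε) fun {j} _ => by
      have hxj : X ≤ x + j * η := hx.trans (le_add_of_nonneg_right (by positivity))
      rw [dist_comm, Nat.cast_succ, add_one_mul, ← add_assoc]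
      exact hstep _ hxj
  simpa [dist_comm] using hsum

lemma eventually_forall_dist_add_le (hf : Continuous f)
    (hinc : ∀ u, Tendsto (fun x => dist (f (x + u)) (f x)) atTop (𝓝 0))
    (hε : 0 < ε) {δ : ℝ} (hδ : 0 < δ) :
    ∀ᶠ x in atTop, ∀ u, 0 ≤ u → dist (f (x + u)) (f x) ≤ ε + δ * u := by
  obtain ⟨η, hη, hshort⟩ := exists_eventually_forall_mem_Icc_dist_add_le hf hinc hε
  have hstep : ∀ᶠ x in atTop, dist (f (x + η)) (f x) ≤ δ * η :=
    (hinc η).eventually_le_const (mul_pos hδ hη)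
  filter_upwards [eventually_forall_ge_atTop.2 hshort, eventually_forall_ge_atTop.2 hstep]
    with x hshort hstep u hu
  set k := ⌊u / η⌋₊
  have hk_le : k * η ≤ u := (le_div_iff₀ hη).1 (Nat.floor_le (by positivity))
  have hk_lt : u < (k + 1) * η := (div_lt_iff₀ hη).1 (Nat.lt_floor_add_one _)
  have hk_nonneg : 0 ≤ k * η := by positivity
  have hrest := hshort (x + k * η) (by linarith) (u - k * η) ⟨by linarith, by linarith⟩
  rw [add_assoc, add_sub_cancel] at hrest
  calc dist (f (x + u)) (f x)
      ≤ dist (f (x + u)) (f (x + k * η)) + dist (f (x + k * η)) (f x) := dist_triangle _ _ _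
    _ ≤ ε + k * (δ * η) := add_le_add hrest (dist_add_nat_mul_le hη.le hstep le_rfl k)
    _ = ε + δ * (k * η) := by ring
    _ ≤ ε + δ * u := by gcongr

end Increments

namespace SlowlyVarying

variable {L : ℝ → ℝ}

lemma pos (hL : SlowlyVarying L) {x : ℝ} (hx : 0 < x) : 0 < L x := hL.2.1 x hx

lemma continuous_log_comp_exp (hL : SlowlyVarying L) : Continuous fun t => log (L (exp t)) :=
  (hL.1.comp_continuous continuous_exp exp_pos).log fun t => (hL.pos (exp_pos t)).ne'

lemma tendsto_dist_log_comp_exp (hL : SlowlyVarying L) (u : ℝ) :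
    Tendsto (fun t => dist (log (L (exp (t + u)))) (log (L (exp t)))) atTop (𝓝 0) := by
  have hratio := ((hL.2.2 (exp u) (exp_pos u)).comp tendsto_exp_atTop).log one_ne_zero
  rw [log_one] at hratio
  refine tendsto_iff_dist_tendsto_zero.1 hratio |>.congr fun t => ?_
  rw [Function.comp_apply, log_div (hL.pos (by positivity)).ne' (hL.pos (exp_pos t)).ne',
    ← exp_add, add_comm u, dist_zero_right, Real.dist_eq, Real.norm_eq_abs]

lemma eventually_abs_log_sub_log_le (hL : SlowlyVarying L) {ε δ : ℝ} (hε : 0 < ε) (hδ : 0 < δ) :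
    ∀ᶠ x in atTop, ∀ y, x ≤ y → |log (L y) - log (L x)| ≤ ε + δ * (log y - log x) := by
  have hpotter := eventually_forall_dist_add_le hL.continuous_log_comp_exp
    hL.tendsto_dist_log_comp_exp hε hδ
  filter_upwards [tendsto_log_atTop.eventually hpotter, eventually_gt_atTop 0]
    with x hpotter hx y hxy
  have hlog := hpotter (log y - log x) (sub_nonneg.2 (log_le_log hx hxy))
  rwa [add_sub_cancel, exp_log hx, exp_log (hx.trans_le hxy), Real.dist_eq] at hlog

end SlowlyVarying

namespace RegularlyVarying

variable {h : ℝ → ℝ} {α : ℝ}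

lemma eventually_pos (hh : RegularlyVarying h α) : ∀ᶠ x in atTop, 0 < h x := by
  obtain ⟨-, L, hL, hlim⟩ := hh
  filter_upwards [hlim.eventually_const_lt one_pos, eventually_gt_atTop 0] with x hquot hx
  exact (div_pos_iff_of_pos_right (mul_pos (rpow_pos_of_pos hx _) (hL.pos hx))).1 hquot

lemma exists_slowlyVarying_tendsto_log (hh : RegularlyVarying h α) :
    ∃ L, SlowlyVarying L ∧
      Tendsto (fun x => log (h x) + α * log x - log (L x)) atTop (𝓝 0) := by
  have hpos := hh.eventually_pos
  obtain ⟨-, L, hL, hlim⟩ := hh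
  refine ⟨L, hL, ?_⟩
  have hlog := hlim.log one_ne_zero
  rw [log_one] at hlog
  refine hlog.congr' ?_
  filter_upwards [hpos, eventually_gt_atTop 0] with x hhx hx
  have hpow := rpow_pos_of_pos hx (-α)
  rw [log_div hhx.ne' (mul_pos hpow (hL.pos hx)).ne', log_mul hpow.ne' (hL.pos hx).ne',
    log_rpow hx]
  ring

lemma eventually_abs_log_sub_log_add_le (hh : RegularlyVarying h α) {ε δ : ℝ}
    (hε : 0 < ε) (hδ : 0 < δ) :
    ∀ᶠ x in atTop, ∀ y, x ≤ y →
      |log (h y) - log (h x) + α * (log y - log x)| ≤ ε + δ * (log y - log x) := by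
  obtain ⟨L, hL, hlim⟩ := hh.exists_slowlyVarying_tendsto_log
  have hclose : ∀ᶠ x in atTop, |log (h x) + α * log x - log (L x)| < ε / 4 := by
    simpa using hlim.abs.eventually_lt_const (by simpa using hε)
  filter_upwards [eventually_forall_ge_atTop.2 hclose,
    hL.eventually_abs_log_sub_log_le (half_pos hε) hδ] with x hclose hpotter y hxy
  have hx := abs_lt.1 (hclose x le_rfl)
  have hy := abs_lt.1 (hclose y hxy)
  have hL_xy := abs_le.1 (hpotter y hxy)
  exact abs_le.2 ⟨by linarith, by linarith⟩

end RegularlyVarying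

lemma monotoneOn_mul_log_add_sub_mul_log {A B c m : ℝ} (hBA : B ≤ A) (hm : 0 < m)
    (hmc : 0 < m + c) (hAB : B * (m + c) ≤ A * m) :
    MonotoneOn (fun x => A * log (x + c) - B * log x) (Ici m) := by
  have hderiv {x : ℝ} (hx : m ≤ x) :
      HasDerivAt (fun x => A * log (x + c) - B * log x) (A / (x + c) - B / x) x := by
    have hxc : 0 < x + c := by linarith
    have hleft := ((hasDerivAt_log hxc.ne').comp_add_const x c).const_mul A
    have hright := (hasDerivAt_log (hm.trans_le hx).ne').const_mul B
    simpa only [div_eq_mul_inv] using hleft.fun_sub hright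
  refine monotoneOn_of_deriv_nonneg (convex_Ici m)
    (fun x hx => (hderiv hx).continuousAt.continuousWithinAt)
    (fun x hx => (hderiv (interior_subset hx)).differentiableAt.differentiableWithinAt)
    fun x hx => ?_
  have hmx : m ≤ x := interior_subset hx
  rw [(hderiv hmx).deriv, sub_nonneg, div_le_div_iff₀ (by linarith) (by linarith)]
  linarith [mul_le_mul_of_nonneg_left hmx (sub_nonneg.2 hBA)]

lemma csSup_div_mem_Icc_one {S : Set ℝ} {a C : ℝ} (ha : 0 < a) (haS : a ∈ S)
    (hS : ∀ z ∈ S, z ≤ C * a) : sSup S / a ∈ Icc 1 C :=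
  ⟨(one_le_div ha).2 (le_csSup ⟨C * a, hS⟩ haS), (div_le_iff₀ ha).2 (csSup_le ⟨a, haS⟩ hS)⟩

lemma exists_pos_add_lt_sub_and_add_mul_lt_sub_mul {a b p q : ℝ} (hab : a < b)
    (hmul : a * p < b * q) : ∃ δ > 0, a + δ < b - δ ∧ (a + δ) * p < (b - δ) * q := by
  have hnear : ∀ᶠ δ in 𝓝 (0 : ℝ), a + δ < b - δ :=
    ContinuousAt.eventually_lt (by fun_prop) (by fun_prop) (by simpa using hab)
  have hnear_mul : ∀ᶠ δ in 𝓝 (0 : ℝ), (a + δ) * p < (b - δ) * q :=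
    ContinuousAt.eventually_lt (by fun_prop) (by fun_prop) (by simpa using hmul)
  obtain ⟨δ, hδ, hδ_pos⟩ := ((hnear.and hnear_mul).filter_mono nhdsWithin_le_nhds |>.and
    (self_mem_nhdsWithin (s := Ioi 0))).exists
  exact ⟨δ, hδ_pos, hδ⟩

namespace RegularlyVarying

variable {h₁ h₂ : ℝ → ℝ} {α₁ α₂ c m : ℝ}

lemma eventually_forall_div_le (hrv₁ : RegularlyVarying h₁ α₁) (hrv₂ : RegularlyVarying h₂ α₂)
    (hlt : α₂ < α₁) (hm : 0 < m) (hmc : 0 < m + c) (hα : α₂ * (m + c) < α₁ * m)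
    {C : ℝ} (hC : 1 < C) :
    ∀ᶠ R in atTop, ∀ x, m * R ≤ x →
      h₁ (x + c * R) / h₂ x ≤ C * (h₁ ((m + c) * R) / h₂ (m * R)) := by
  obtain ⟨δ, hδ, hgap, hthreshold⟩ := exists_pos_add_lt_sub_and_add_mul_lt_sub_mul hlt hα
  have hε : 0 < log C / 2 := half_pos (log_pos hC)
  have hatTop₁ : Tendsto (fun R => (m + c) * R) atTop atTop := tendsto_id.const_mul_atTop hmc
  have hatTop₂ : Tendsto (fun R => m * R) atTop atTop := tendsto_id.const_mul_atTop hm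
  filter_upwards [hatTop₁.eventually (eventually_forall_ge_atTop.2 hrv₁.eventually_pos),
    hatTop₂.eventually (eventually_forall_ge_atTop.2 hrv₂.eventually_pos),
    hatTop₁.eventually (hrv₁.eventually_abs_log_sub_log_add_le hε hδ),
    hatTop₂.eventually (hrv₂.eventually_abs_log_sub_log_add_le hε hδ),
    eventually_gt_atTop 0] with R hpos₁ hpos₂ hpotter₁ hpotter₂ hR x hx
  have hx' : (m + c) * R ≤ x + c * R := by linarith
  have hnum := (abs_le.1 (hpotter₁ _ hx')).2
  have hden := (abs_le.1 (hpotter₂ x hx)).1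
  have hmono := monotoneOn_mul_log_add_sub_mul_log hgap.le (c := c * R) (mul_pos hm hR)
    (by rw [← add_mul]; positivity)
    (by simpa only [← add_mul, ← mul_assoc] using mul_le_mul_of_nonneg_right hthreshold.le hR.le)
    self_mem_Ici hx hx
  simp only [← add_mul] at hmono
  have hx₁ := hpos₁ _ hx'
  have hx₂ := hpos₂ x hx
  have hbase₁ := hpos₁ _ le_rfl
  have hbase₂ := hpos₂ _ le_rfl
  rw [← log_le_log_iff (by positivity) (by positivity), log_mul (by positivity) (by positivity),
    log_div hx₁.ne' hx₂.ne', log_div hbase₁.ne' hbase₂.ne']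
  linarith

theorem tendsto_sSup_div (hrv₁ : RegularlyVarying h₁ α₁) (hrv₂ : RegularlyVarying h₂ α₂)
    (hlt : α₂ < α₁) (hm : 0 < m) (hmc : 0 < m + c) (hα : α₂ * (m + c) < α₁ * m) :
    Tendsto (fun R =>
        sSup ((fun x => h₁ (x + c * R) / h₂ x) '' Ici (m * R)) /
          (h₁ ((m + c) * R) / h₂ (m * R)))
      atTop (𝓝 1) := by
  have hmem_Icc (C : ℝ) (hC : 1 < C) : ∀ᶠ R in atTop,
      sSup ((fun x => h₁ (x + c * R) / h₂ x) '' Ici (m * R)) /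
        (h₁ ((m + c) * R) / h₂ (m * R)) ∈ Icc 1 C := by
    filter_upwards [hrv₁.eventually_forall_div_le hrv₂ hlt hm hmc hα hC,
      (tendsto_id.const_mul_atTop hmc).eventually hrv₁.eventually_pos,
      (tendsto_id.const_mul_atTop hm).eventually hrv₂.eventually_pos] with R hle hpos₁ hpos₂
    exact csSup_div_mem_Icc_one (div_pos hpos₁ hpos₂)
      ⟨m * R, self_mem_Ici, by simp only [add_mul]⟩ (forall_mem_image.2 hle)
  refine tendsto_order.2 ⟨fun a ha => ?_, fun b hb => ?_⟩
  · filter_upwards [hmem_Icc 2 one_lt_two] with R hR using ha.trans_le hR.1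
  · obtain ⟨C, hC, hCb⟩ := exists_between hb
    filter_upwards [hmem_Icc C hC] with R hR using hR.2.trans_lt hCb

end RegularlyVarying

theorem statement0_general (h₁ h₂ : ℝ → ℝ) (α₁ α₂ : ℝ)
    (hrv₁ : RegularlyVarying h₁ α₁) (hrv₂ : RegularlyVarying h₂ α₂)
    (hlt : α₂ < α₁) (c : ℝ) :
    ∃ m₀ : ℝ, -c < m₀ ∧ ∀ m : ℝ, m₀ ≤ m →
      Tendsto (fun R =>
          sSup ((fun x => h₁ (x + c * R) / h₂ x) '' Ici (m * R)) /
            (h₁ ((m + c) * R) / h₂ (m * R)))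
        atTop (𝓝 1) := by
  refine ⟨max |c| (α₂ * c / (α₁ - α₂)) + 1, ?_, fun m hm => ?_⟩
  · linarith [neg_abs_le c, le_max_left |c| (α₂ * c / (α₁ - α₂))]
  have hc_lt : |c| < m := by linarith [le_max_left |c| (α₂ * c / (α₁ - α₂))]
  have hα_lt : α₂ * c / (α₁ - α₂) < m := by linarith [le_max_right |c| (α₂ * c / (α₁ - α₂))]
  rw [div_lt_iff₀ (sub_pos.2 hlt)] at hα_lt
  exact hrv₁.tendsto_sSup_div hrv₂ hlt (by linarith [abs_nonneg c]) (by linarith [neg_abs_le c])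
    (by linarith)

/-- if `h₁, h₂` are regularly varying with indices `α₁ > α₂ ≥ 0`, then for every
`c ∈ ℝ` there exists `m₀ > -c` such that for every `m ≥ m₀`,
`sup_{x ≥ mR} h₁(x + cR)/h₂(x) ∼ h₁((m+c)R)/h₂(mR)` as `R → ∞`. -/
theorem statement0 (h₁ h₂ : ℝ → ℝ) (α₁ α₂ : ℝ)
    (hrv₁ : RegularlyVarying h₁ α₁) (hrv₂ : RegularlyVarying h₂ α₂)
    (hlt : α₂ < α₁) (hnn : 0 ≤ α₂) (c : ℝ) :
    ∃ m₀ : ℝ, -c < m₀ ∧ ∀ m : ℝ, m₀ ≤ m →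
      Tendsto (fun R =>
          sSup ((fun x => h₁ (x + c * R) / h₂ x) '' Set.Ici (m * R)) /
            (h₁ ((m + c) * R) / h₂ (m * R)))
        atTop (nhds 1) :=
  statement0_general h₁ h₂ α₁ α₂ hrv₁ hrv₂ hlt c
end

section
/- Let γ < 1 and let h : [0,∞) → ℝ be continuous with h(x) ∼ x^{−1} (log x)^{−γ} as x → ∞. Let r : (0,∞) → [0,∞) satisfy r(R) = R^{o(1)} as R → ∞ (i.e. log(max(r(R),2))/log R → 0). Then, as R → ∞, (1/(2R)) ∫₀^R ∫₀^R h(|x−y|) 1_{|x−y| ≥ r(R)} dx dy ∼ ∫₀^R h(x) dx, and min_{z ∈ [0, r(R)]} ∫₀^R h(√(x² + z²)) dx ∼ ∫₀^R h(x) dx. -/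
open Filter

/-!
Write `I R = ∫₀ᴿ h`. Then `I R ∼ (log R) ^ (1 - γ) / (1 - γ)`, so `I` is slowly varying and
`I (R ^ ε) ∼ ε ^ (1 - γ) * I R`; the same holds for `∫₀ᴿ |h|`, hence the mass of `|h|` on
`[0, r R + a]` is `o(I R)` for every `r R = R ^ o(1)`.

By symmetry, `∫₀ᴿ∫₀ᴿ g |x - y| = 2 ∫₀ᴿ∫₀ˣ g`, so the first quantity is the average of `I` over
`[0, R]` up to the mass of `|h|` on `[0, r R]`. After the scaling `x = u R`, dominated convergence
shows that the average of a slowly varying function is asymptotic to the function itself.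

For the second quantity, `z = 0` gives the upper bound. Conversely, if `h ≥ 0` on `[a, ∞)`, the
substitution `u = √(x² + z²)`, for which `du ≤ dx`, bounds `∫ₐᴿ h(√(x² + z²)) dx` below by the
integral of `h` over `[√(a² + z²), √(R² + z²)]`, which is at least `I R` minus the mass of `|h|` on
`[0, z + a]`.
-/

open Asymptotics MeasureTheory Set Topology

/-- Slow variation at infinity in the sense of Karamata, for functions of a real variable. -/
def IsSlowlyVarying (F : ℝ → ℝ) : Prop :=
  ∀ u : ℝ, 0 < u → (fun R => F (u * R)) ~[atTop] F

section SlowVariation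

theorem isEquivalent_rpow_of_eventually_nonneg {α : Type*} {l : Filter α} {u v : α → ℝ}
    (huv : u ~[l] v) (hv : ∀ᶠ x in l, 0 ≤ v x) (p : ℝ) :
    (fun x => u x ^ p) ~[l] fun x => v x ^ p := by
  have hmax : v =ᶠ[l] fun x => max (v x) 0 := hv.mono fun _ hx => (max_eq_left hx).symm
  exact ((huv.congr_right hmax).rpow fun _ => le_max_right _ _).congr_right
    (hmax.symm.fun_comp (· ^ p))

theorem IsSlowlyVarying.congr {F G : ℝ → ℝ} (hG : IsSlowlyVarying G) (hFG : F ~[atTop] G) :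
    IsSlowlyVarying F := fun u hu =>
  ((hFG.comp_tendsto (tendsto_id.const_mul_atTop hu)).trans (hG u hu)).trans hFG.symm

theorem isSlowlyVarying_const_mul_log_rpow (c p : ℝ) :
    IsSlowlyVarying fun R => c * Real.log R ^ p := fun u hu => by
  have hlog : (fun R => Real.log (u * R)) ~[atTop] Real.log := by
    refine (IsEquivalent.refl.const_add_of_norm_tendsto_atTop (c := Real.log u)
      (tendsto_norm_atTop_atTop.comp Real.tendsto_log_atTop)).congr_left ?_
    filter_upwards [eventually_gt_atTop 0] with R hR
    exact (Real.log_mul hu.ne' hR.ne').symm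
  exact IsEquivalent.refl.mul (isEquivalent_rpow_of_eventually_nonneg hlog
    (Real.tendsto_log_atTop.eventually_ge_atTop 0) p)

theorem isEquivalent_comp_rpow_of_isEquivalent_log_rpow {F : ℝ → ℝ} {c p ε : ℝ} (hε : 0 < ε)
    (hF : F ~[atTop] fun R => c * Real.log R ^ p) :
    (fun R => F (R ^ ε)) ~[atTop] fun R => ε ^ p * F R := by
  refine ((hF.comp_tendsto (tendsto_rpow_atTop hε)).congr_right ?_).trans
    (IsEquivalent.refl.mul hF.symm)
  filter_upwards [eventually_gt_atTop 1] with R hR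
  simp only [Function.comp_apply, Pi.mul_apply]
  rw [Real.log_rpow (by positivity), Real.mul_rpow hε.le (Real.log_pos hR).le]
  ring

theorem isLittleO_comp_of_isEquivalent_log_rpow {F s : ℝ → ℝ} {c p : ℝ} (hp : 0 < p)
    (hF : F ~[atTop] fun R => c * Real.log R ^ p) (hmono : MonotoneOn F (Ici 0))
    (hnonneg : ∀ x, 0 ≤ x → 0 ≤ F x) (hs₀ : ∀ R, 0 ≤ s R)
    (hs : ∀ ε : ℝ, 0 < ε → ∀ᶠ R in atTop, s R ≤ R ^ ε) :
    (fun R => F (s R)) =o[atTop] F := by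
  refine isLittleO_iff.2 fun η hη => ?_
  set ε : ℝ := (η / 2) ^ p⁻¹
  have hε : 0 < ε := by positivity
  have hεp : ε ^ p = η / 2 := Real.rpow_inv_rpow (by positivity) hp.ne'
  have hupper := (isEquivalent_comp_rpow_of_isEquivalent_log_rpow hε hF).isLittleO.bound one_pos
  filter_upwards [hupper, hs ε hε, eventually_ge_atTop 0] with R hR hsR hR₀
  have hsmono : F (s R) ≤ F (R ^ ε) := hmono (hs₀ R) (Real.rpow_nonneg hR₀ ε) hsR
  have hFR := hnonneg R hR₀
  rw [hεp, Pi.sub_apply, Real.norm_eq_abs, one_mul, Real.norm_of_nonneg (by positivity)] at hR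
  rw [Real.norm_of_nonneg (hnonneg _ (hs₀ R)), Real.norm_of_nonneg hFR]
  linarith [le_abs_self (F (R ^ ε) - η / 2 * F R)]

theorem eventually_add_const_le_rpow {r : ℝ → ℝ}
    (hr : Tendsto (fun R => Real.log (max (r R) 2) / Real.log R) atTop (𝓝 0)) (c : ℝ) {ε : ℝ}
    (hε : 0 < ε) : ∀ᶠ R in atTop, r R + c ≤ R ^ ε := by
  have hhalf := tendsto_rpow_atTop (half_pos hε)
  filter_upwards [hr.eventually_le_const (half_pos hε), eventually_gt_atTop 1,
    hhalf.eventually_ge_atTop (1 + |c|)] with R hlog hR hlarge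
  have hmax : max (r R) 2 ≤ R ^ (ε / 2) := by
    rw [div_le_iff₀ (Real.log_pos hR)] at hlog
    exact (Real.le_rpow_iff_log_le (by positivity) (by positivity)).2 hlog
  calc r R + c ≤ R ^ (ε / 2) + |c| := add_le_add ((le_max_left _ _).trans hmax) (le_abs_self c)
    _ ≤ R ^ (ε / 2) * R ^ (ε / 2) := by nlinarith [abs_nonneg c]
    _ = R ^ ε := by rw [← Real.rpow_add (by positivity), add_halves]

end SlowVariation

section Integrals

variable {E : Type*} [NormedAddCommGroup E] {f : ℝ → E} {a : ℝ}

theorem intervalIntegrable_of_locallyIntegrableOn_Ici {b c : ℝ}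
    (hf : LocallyIntegrableOn f (Ici a)) (hb : a ≤ b) (hc : a ≤ c) :
    IntervalIntegrable f volume b c :=
  (hf.integrableOn_compact_subset (fun _ hx => (le_inf hb hc).trans hx.1)
    isCompact_uIcc).intervalIntegrable

theorem isLittleO_integral [NormedSpace ℝ E] {g : ℝ → ℝ} (hf : LocallyIntegrableOn f (Ici a))
    (hg : LocallyIntegrableOn g (Ici a)) (hfg : f =o[atTop] g) (hg₀ : ∀ᶠ x in atTop, 0 ≤ g x)
    (hG : Tendsto (fun R => ∫ x in a..R, g x) atTop atTop) :
    (fun R => ∫ x in a..R, f x) =o[atTop] fun R => ∫ x in a..R, g x := by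
  refine isLittleO_iff.2 fun ε hε => ?_
  obtain ⟨b, hb⟩ := eventually_atTop.1
    ((hfg.bound (half_pos hε)).and (hg₀.and (eventually_ge_atTop a)))
  have hab : a ≤ b := (hb b le_rfl).2.2
  have hfab := intervalIntegrable_of_locallyIntegrableOn_Ici hf le_rfl hab
  have hgab := intervalIntegrable_of_locallyIntegrableOn_Ici hg le_rfl hab
  set C : ℝ := ‖∫ x in a..b, f x‖ - ε / 2 * ∫ x in a..b, g x
  filter_upwards [eventually_ge_atTop b, hG.eventually_ge_atTop 0,
    (hG.const_mul_atTop (half_pos hε)).eventually_ge_atTop C] with R hbR hGR hCR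
  have hfbR := intervalIntegrable_of_locallyIntegrableOn_Ici hf hab (hab.trans hbR)
  have hgbR := intervalIntegrable_of_locallyIntegrableOn_Ici hg hab (hab.trans hbR)
  have htail : ‖∫ x in b..R, f x‖ ≤ ε / 2 * ∫ x in b..R, g x := by
    rw [← intervalIntegral.integral_const_mul]
    refine intervalIntegral.norm_integral_le_of_norm_le hbR
      (Eventually.of_forall fun x hx => ?_) (hgbR.const_mul _)
    obtain ⟨hfx, hgx, -⟩ := hb x hx.1.le
    rwa [Real.norm_of_nonneg hgx] at hfx
  rw [Real.norm_of_nonneg hGR]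
  calc ‖∫ x in a..R, f x‖ = ‖(∫ x in a..b, f x) + ∫ x in b..R, f x‖ := by
        rw [intervalIntegral.integral_add_adjacent_intervals hfab hfbR]
    _ ≤ ‖∫ x in a..b, f x‖ + ε / 2 * ∫ x in b..R, g x :=
        (norm_add_le _ _).trans (add_le_add_right htail _)
    _ = C + ε / 2 * ∫ x in a..R, g x := by
        rw [← intervalIntegral.integral_add_adjacent_intervals hgab hgbR]; ring
    _ ≤ ε * ∫ x in a..R, g x := by linarith

theorem isEquivalent_integral {f g : ℝ → ℝ} (hf : LocallyIntegrableOn f (Ici a))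
    (hg : LocallyIntegrableOn g (Ici a)) (hfg : f ~[atTop] g) (hg₀ : ∀ᶠ x in atTop, 0 ≤ g x)
    (hG : Tendsto (fun R => ∫ x in a..R, g x) atTop atTop) :
    (fun R => ∫ x in a..R, f x) ~[atTop] fun R => ∫ x in a..R, g x := by
  refine (isLittleO_integral (hf.sub hg) hg hfg.isLittleO hg₀ hG).congr' ?_ .rfl
  filter_upwards [eventually_ge_atTop a] with R hR
  exact intervalIntegral.integral_sub
    (intervalIntegrable_of_locallyIntegrableOn_Ici hf le_rfl hR)
    (intervalIntegrable_of_locallyIntegrableOn_Ici hg le_rfl hR)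

theorem isEquivalent_integral_norm {f : ℝ → ℝ} (hf : LocallyIntegrableOn f (Ici a))
    (hf₀ : ∀ᶠ x in atTop, 0 ≤ f x) (hF : Tendsto (fun R => ∫ x in a..R, f x) atTop atTop) :
    (fun R => ∫ x in a..R, ‖f x‖) ~[atTop] fun R => ∫ x in a..R, f x :=
  isEquivalent_integral hf.norm hf
    (EventuallyEq.isEquivalent (hf₀.mono fun _ => abs_of_nonneg)) hf₀ hF

theorem monotoneOn_integral_norm (hf : LocallyIntegrableOn f (Ici a)) :
    MonotoneOn (fun R => ∫ x in a..R, ‖f x‖) (Ici a) := fun _ hx _ hy hxy =>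
  intervalIntegral.integral_mono_interval le_rfl hx hxy
    (Eventually.of_forall fun _ => norm_nonneg _)
    (intervalIntegrable_of_locallyIntegrableOn_Ici hf le_rfl hy).norm

theorem norm_integral_indicator_Ici_sub_integral_le [NormedSpace ℝ E] {r x : ℝ}
    (hr : IntervalIntegrable f volume a r) (hx : IntervalIntegrable f volume a x) (har : a ≤ r)
    (hax : a ≤ x) :
    ‖(∫ t in a..x, (Ici r).indicator f t) - ∫ t in a..x, f t‖ ≤ ∫ t in a..r, ‖f t‖ := by
  have hremoved : (∫ t in a..x, (Ici r).indicator f t) - ∫ t in a..x, f t =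
      -∫ t in Ioc a x \ Ici r, f t := by
    rw [intervalIntegral.integral_of_le hax, intervalIntegral.integral_of_le hax,
      setIntegral_indicator measurableSet_Ici,
      ← integral_inter_add_sdiff measurableSet_Ici hx.1]
    abel
  rw [hremoved, norm_neg, intervalIntegral.integral_of_le har]
  refine norm_integral_le_integral_norm (f := f) |>.trans ?_
  exact setIntegral_mono_set hr.1.norm (Eventually.of_forall fun _ => norm_nonneg _)
    (Eventually.of_forall fun t ht => ⟨ht.1.1, (not_le.1 ht.2).le⟩)

theorem integral_comp_abs_sub [NormedSpace ℝ E] {R x : ℝ} (hx : x ∈ Icc 0 R)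
    (hf : IntervalIntegrable f volume 0 R) :
    ∫ y in (0 : ℝ)..R, f |x - y| = (∫ t in (0 : ℝ)..x, f t) + ∫ t in (0 : ℝ)..(R - x), f t := by
  have hleft : EqOn (fun y => f (x - y)) (fun y => f |x - y|) (uIoo 0 x) := fun y hy => by
    rw [uIoo_of_le hx.1] at hy
    simp only [abs_of_nonneg (sub_nonneg.2 hy.2.le)]
  have hright : EqOn (fun y => f (y - x)) (fun y => f |x - y|) (uIoo x R) := fun y hy => by
    rw [uIoo_of_le hx.2] at hy
    simp only [abs_sub_comm x, abs_of_nonneg (sub_nonneg.2 hy.1.le)]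
  have hfmono : ∀ b ∈ Icc 0 R, IntervalIntegrable f volume 0 b := fun b hb =>
    hf.mono_set (uIcc_subset_uIcc_left (Icc_subset_uIcc hb))
  have hintleft : IntervalIntegrable (fun y => f (x - y)) volume 0 x := by
    simpa using ((hfmono x hx).comp_sub_left x).symm
  have hintright : IntervalIntegrable (fun y => f (y - x)) volume x R := by
    simpa using (hfmono (R - x) ⟨sub_nonneg.2 hx.2, sub_le_self R hx.1⟩).comp_sub_right x
  rw [← intervalIntegral.integral_add_adjacent_intervals (hintleft.congr_uIoo hleft)
      (hintright.congr_uIoo hright),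
    ← intervalIntegral.integral_congr_uIoo hleft, ← intervalIntegral.integral_congr_uIoo hright,
    intervalIntegral.integral_comp_sub_left, intervalIntegral.integral_comp_sub_right, sub_self,
    sub_zero]

theorem integral_integral_comp_abs_sub [NormedSpace ℝ E] {R : ℝ} (hR : 0 ≤ R)
    (hf : IntervalIntegrable f volume 0 R) :
    ∫ x in (0 : ℝ)..R, ∫ y in (0 : ℝ)..R, f |x - y| =
      (2 : ℝ) • ∫ x in (0 : ℝ)..R, ∫ t in (0 : ℝ)..x, f t := by
  have hprim : IntervalIntegrable (fun x => ∫ t in (0 : ℝ)..x, f t) volume 0 R :=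
    (intervalIntegral.continuousOn_primitive_interval' hf left_mem_uIcc).intervalIntegrable
  have hprim' : IntervalIntegrable (fun x => ∫ t in (0 : ℝ)..(R - x), f t) volume 0 R := by
    simpa using (hprim.comp_sub_left R).symm
  rw [intervalIntegral.integral_congr fun x hx => integral_comp_abs_sub (uIcc_of_le hR ▸ hx) hf,
    intervalIntegral.integral_add hprim hprim',
    intervalIntegral.integral_comp_sub_left (fun x => ∫ t in (0 : ℝ)..x, f t) R, sub_self, sub_zero,
    two_smul]

end Integrals

section Average

variable {f : ℝ → ℝ}

theorem IsSlowlyVarying.isEquivalent_average {F : ℝ → ℝ} {C : ℝ} (hF : IsSlowlyVarying F)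
    (hint : ∀ᶠ R in atTop, IntervalIntegrable F volume 0 R) (hne : ∀ᶠ R in atTop, F R ≠ 0)
    (hdom : ∀ᶠ R in atTop, ∀ x ∈ Icc 0 R, ‖F x‖ ≤ C * ‖F R‖) :
    (fun R => R⁻¹ * ∫ x in (0 : ℝ)..R, F x) ~[atTop] F := by
  rw [isEquivalent_iff_tendsto_one hne]
  have hlim : Tendsto (fun R => ∫ u in (0 : ℝ)..1, F (u * R) / F R) atTop
      (𝓝 (∫ _ in (0 : ℝ)..1, 1)) := by
    refine intervalIntegral.tendsto_integral_filter_of_dominated_convergence (fun _ => C) ?_ ?_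
      intervalIntegrable_const ?_
    · filter_upwards [hint, eventually_gt_atTop 0] with R hR hR₀
      have hscaled := (hR.comp_mul_right (c := R)).div_const (F R)
      rw [zero_div, div_self hR₀.ne'] at hscaled
      exact hscaled.def'.aestronglyMeasurable
    · filter_upwards [hdom, hne, eventually_ge_atTop 0] with R hR hFR hR₀
      refine Eventually.of_forall fun u hu => ?_
      rw [uIoc_of_le zero_le_one] at hu
      rw [norm_div, div_le_iff₀ (norm_pos_iff.2 hFR)]
      exact hR _ ⟨mul_nonneg hu.1.le hR₀, mul_le_of_le_one_left hR₀ hu.2⟩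
    · refine Eventually.of_forall fun u hu => ?_
      rw [uIoc_of_le zero_le_one] at hu
      exact (isEquivalent_iff_tendsto_one hne).1 (hF u hu.1)
  rw [intervalIntegral.integral_const, sub_zero, one_smul] at hlim
  refine hlim.congr' ?_
  filter_upwards [eventually_ne_atTop 0] with R hR
  rw [intervalIntegral.integral_div, intervalIntegral.integral_comp_mul_right F hR, zero_mul,
    one_mul, smul_eq_mul, Pi.div_apply]

theorem isEquivalent_average_integral (hf : LocallyIntegrableOn f (Ici 0))
    (hf₀ : ∀ᶠ x in atTop, 0 ≤ f x)
    (hF : Tendsto (fun R => ∫ x in (0 : ℝ)..R, f x) atTop atTop)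
    (hslow : IsSlowlyVarying fun R => ∫ x in (0 : ℝ)..R, f x) :
    (fun R => R⁻¹ * ∫ x in (0 : ℝ)..R, ∫ t in (0 : ℝ)..x, f t) ~[atTop]
      fun R => ∫ x in (0 : ℝ)..R, f x := by
  obtain ⟨C, hC⟩ := (isEquivalent_integral_norm hf hf₀ hF).isBigO.bound
  refine hslow.isEquivalent_average (C := C) ?_ (hF.eventually_ne_atTop 0) ?_
  · filter_upwards [eventually_ge_atTop 0] with R hR
    exact (intervalIntegral.continuousOn_primitive_interval'
      (intervalIntegrable_of_locallyIntegrableOn_Ici hf le_rfl hR) left_mem_uIcc).intervalIntegrable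
  · filter_upwards [hC] with R hR x hx
    calc ‖∫ t in (0 : ℝ)..x, f t‖ ≤ ∫ t in (0 : ℝ)..x, ‖f t‖ :=
          intervalIntegral.norm_integral_le_integral_norm hx.1
      _ ≤ ∫ t in (0 : ℝ)..R, ‖f t‖ :=
          monotoneOn_integral_norm hf hx.1 (hx.1.trans hx.2) hx.2
      _ ≤ C * ‖∫ t in (0 : ℝ)..R, f t‖ := (Real.le_norm_self _).trans hR

theorem abs_truncated_average_sub_average_le {r R : ℝ}
    (hf : LocallyIntegrableOn f (Ici 0)) (hr : 0 ≤ r) (hR : 0 < R) :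
    |1 / (2 * R) * (∫ x in (0 : ℝ)..R, ∫ y in (0 : ℝ)..R, if r ≤ |x - y| then f |x - y| else 0) -
        R⁻¹ * ∫ x in (0 : ℝ)..R, ∫ t in (0 : ℝ)..x, f t| ≤ ∫ t in (0 : ℝ)..r, ‖f t‖ := by
  have hint : ∀ b, 0 ≤ b → IntervalIntegrable f volume 0 b := fun b =>
    intervalIntegrable_of_locallyIntegrableOn_Ici hf le_rfl
  have htrunc : IntervalIntegrable ((Ici r).indicator f) volume 0 R :=
    ⟨(hint R hR.le).1.indicator measurableSet_Ici, (hint R hR.le).2.indicator measurableSet_Ici⟩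
  have hprim : ∀ {g : ℝ → ℝ}, IntervalIntegrable g volume 0 R →
      IntervalIntegrable (fun x => ∫ t in (0 : ℝ)..x, g t) volume 0 R := fun hg =>
    (intervalIntegral.continuousOn_primitive_interval' hg left_mem_uIcc).intervalIntegrable
  have hdouble := integral_integral_comp_abs_sub hR.le htrunc
  simp only [indicator_apply, mem_Ici] at hdouble
  have hbound : |∫ x in (0 : ℝ)..R, ((∫ t in (0 : ℝ)..x, (Ici r).indicator f t) -
      ∫ t in (0 : ℝ)..x, f t)| ≤ (∫ t in (0 : ℝ)..r, ‖f t‖) * R := by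
    rw [← Real.norm_eq_abs]
    refine (intervalIntegral.norm_integral_le_of_norm_le_const
      (C := ∫ t in (0 : ℝ)..r, ‖f t‖) fun x hx => ?_).trans_eq (by rw [sub_zero, abs_of_pos hR])
    rw [uIoc_of_le hR.le] at hx
    exact norm_integral_indicator_Ici_sub_integral_le (hint r hr) (hint x hx.1.le) hr hx.1.le
  rw [intervalIntegral.integral_sub (hprim htrunc) (hprim (hint R hR.le))] at hbound
  simp only [indicator_apply, mem_Ici] at hbound
  rw [hdouble, smul_eq_mul, one_div, mul_inv_rev, mul_assoc, inv_mul_cancel_left₀ two_ne_zero,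
    ← mul_sub, abs_mul, abs_of_pos (inv_pos.2 hR), inv_mul_le_iff₀ hR, mul_comm R]
  exact hbound

theorem isEquivalent_truncated_average {r : ℝ → ℝ} (hf : LocallyIntegrableOn f (Ici 0))
    (hf₀ : ∀ᶠ x in atTop, 0 ≤ f x)
    (hF : Tendsto (fun R => ∫ x in (0 : ℝ)..R, f x) atTop atTop)
    (hslow : IsSlowlyVarying fun R => ∫ x in (0 : ℝ)..R, f x) (hr₀ : ∀ R, 0 ≤ r R)
    (hr : (fun R => ∫ t in (0 : ℝ)..r R, ‖f t‖) =o[atTop] fun R => ∫ x in (0 : ℝ)..R, f x) :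
    (fun R => 1 / (2 * R) * ∫ x in (0 : ℝ)..R, ∫ y in (0 : ℝ)..R,
      if r R ≤ |x - y| then f |x - y| else 0) ~[atTop] fun R => ∫ x in (0 : ℝ)..R, f x := by
  refine ((IsBigO.of_norm_eventuallyLE ?_).trans_isLittleO hr).add_isEquivalent
    (isEquivalent_average_integral hf hf₀ hF hslow) |>.congr_left (.of_eq (sub_add_cancel _ _))
  filter_upwards [eventually_gt_atTop 0] with R hR
  exact abs_truncated_average_sub_average_le hf (hr₀ R) hR

end Average

section OffAxis

variable {f : ℝ → ℝ}

theorem integral_le_integral_comp_sqrt_sq_add_sq {a b : ℝ} (hf : ContinuousOn f (Ici a))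
    (hf₀ : ∀ x, a ≤ x → 0 ≤ f x) (ha : 0 < a) (hab : a ≤ b) (z : ℝ) :
    ∫ u in √(a ^ 2 + z ^ 2)..√(b ^ 2 + z ^ 2), f u ≤ ∫ x in a..b, f √(x ^ 2 + z ^ 2) := by
  have hle : ∀ x, x ≤ √(x ^ 2 + z ^ 2) := fun x =>
    Real.le_sqrt_of_sq_le (le_add_of_nonneg_right (sq_nonneg z))
  have hpos : ∀ x ∈ Icc a b, 0 < √(x ^ 2 + z ^ 2) := fun x hx => (ha.trans_le hx.1).trans_le (hle x)
  have hsqrt : Continuous fun x : ℝ => √(x ^ 2 + z ^ 2) := by fun_prop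
  have hcomp : ContinuousOn (fun x => f √(x ^ 2 + z ^ 2)) (Icc a b) :=
    hf.comp hsqrt.continuousOn fun x hx => hx.1.trans (hle x)
  have hderiv : ∀ x ∈ Ioo a b,
      HasDerivAt (fun x => √(x ^ 2 + z ^ 2)) (x / √(x ^ 2 + z ^ 2)) x := fun x hx => by
    have hsq : HasDerivAt (fun x => x ^ 2 + z ^ 2) (2 * x) x := by
      simpa using (hasDerivAt_pow 2 x).add_const (z ^ 2)
    have hne := (Real.sqrt_pos.1 (hpos x (Ioo_subset_Icc_self hx))).ne'
    simpa [mul_div_mul_left] using hsq.sqrt hne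
  have hsubst := intervalIntegral.integral_comp_mul_deriv_of_deriv_nonneg (a := a) (b := b)
    (g := f) hsqrt.continuousOn (by simpa [hab] using hderiv) fun x hx => div_nonneg
      (by simp only [min_eq_left hab] at hx; linarith [hx.1]) (Real.sqrt_nonneg _)
  rw [← hsubst]
  refine intervalIntegral.integral_mono_on hab
    ((hcomp.mul (continuousOn_id.div hsqrt.continuousOn fun x hx => (hpos x hx).ne')
      ).intervalIntegrable_of_Icc hab) (hcomp.intervalIntegrable_of_Icc hab) fun x hx => ?_
  exact mul_le_of_le_one_right (hf₀ _ (hx.1.trans (hle x))) ((div_le_one (hpos x hx)).2 (hle x))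

theorem integral_sub_integral_norm_le_integral_comp_sqrt_sq_add_sq {a R z : ℝ}
    (hf : ContinuousOn f (Ici 0)) (hf₀ : ∀ x, a ≤ x → 0 ≤ f x) (ha : 0 < a) (haR : a ≤ R)
    (hz : 0 ≤ z) :
    (∫ x in (0 : ℝ)..R, f x) - ∫ x in (0 : ℝ)..z + a, ‖f x‖ ≤
      ∫ x in a..R, f √(x ^ 2 + z ^ 2) := by
  have hloc : LocallyIntegrableOn f (Ici 0) := hf.locallyIntegrableOn measurableSet_Ici
  have hint : ∀ {b c}, 0 ≤ b → 0 ≤ c → IntervalIntegrable f volume b c :=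
    intervalIntegrable_of_locallyIntegrableOn_Ici hloc
  have hR : 0 ≤ R := ha.le.trans haR
  set s := √(a ^ 2 + z ^ 2)
  set t := √(R ^ 2 + z ^ 2)
  have hs₀ : 0 ≤ s := Real.sqrt_nonneg _
  have hs : s ≤ z + a := (Real.sqrt_le_left (by positivity)).2 (by nlinarith)
  have ht : R ≤ t := Real.le_sqrt_of_sq_le (le_add_of_nonneg_right (sq_nonneg z))
  have hhead : ∫ x in (0 : ℝ)..s, f x ≤ ∫ x in (0 : ℝ)..z + a, ‖f x‖ :=
    calc ∫ x in (0 : ℝ)..s, f x ≤ ∫ x in (0 : ℝ)..s, ‖f x‖ :=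
          (Real.le_norm_self _).trans (intervalIntegral.norm_integral_le_integral_norm hs₀)
      _ ≤ ∫ x in (0 : ℝ)..z + a, ‖f x‖ := monotoneOn_integral_norm hloc hs₀ (hs₀.trans hs) hs
  have htail : 0 ≤ ∫ x in R..t, f x :=
    intervalIntegral.integral_nonneg ht fun x hx => hf₀ x (haR.trans hx.1)
  calc (∫ x in (0 : ℝ)..R, f x) - ∫ x in (0 : ℝ)..z + a, ‖f x‖
      ≤ (∫ x in (0 : ℝ)..R, f x) + (∫ x in R..t, f x) - ∫ x in (0 : ℝ)..s, f x := by linarith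
    _ = ∫ x in s..t, f x := by
        rw [intervalIntegral.integral_add_adjacent_intervals (hint le_rfl hR)
            (hint hR (hR.trans ht)),
          intervalIntegral.integral_interval_sub_left (hint le_rfl (hR.trans ht))
            (hint le_rfl hs₀)]
    _ ≤ ∫ x in a..R, f √(x ^ 2 + z ^ 2) :=
        integral_le_integral_comp_sqrt_sq_add_sq (hf.mono (Ici_subset_Ici.2 ha.le)) hf₀ ha haR z

theorem exists_forall_le_of_continuousOn_Ici {a : ℝ} (hf : ContinuousOn f (Ici a))
    (hf₀ : ∀ᶠ x in atTop, 0 ≤ f x) : ∃ B, ∀ x, a ≤ x → B ≤ f x := by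
  obtain ⟨b, hb⟩ := eventually_atTop.1 hf₀
  obtain ⟨B, hB⟩ := (isCompact_Icc (a := a) (b := b)).bddBelow_image (hf.mono Icc_subset_Ici_self)
  refine ⟨min B 0, fun x hx => ?_⟩
  rcases le_total x b with hxb | hbx
  · exact (min_le_left B 0).trans (hB (mem_image_of_mem f ⟨hx, hxb⟩))
  · exact (min_le_right B 0).trans (hb x hbx)

theorem exists_sub_le_integral_comp_sqrt_sq_add_sq (hf : ContinuousOn f (Ici 0))
    (hf₀ : ∀ᶠ x in atTop, 0 ≤ f x) :
    ∃ a C : ℝ, 0 < a ∧ ∀ R, a ≤ R → ∀ z, 0 ≤ z →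
      (∫ x in (0 : ℝ)..R, f x) - (∫ x in (0 : ℝ)..z + a, ‖f x‖) - C ≤
        ∫ x in (0 : ℝ)..R, f √(x ^ 2 + z ^ 2) := by
  obtain ⟨a, ha⟩ := eventually_atTop.1 (hf₀.and (eventually_gt_atTop 0))
  have ha₀ : 0 < a := (ha a le_rfl).2
  obtain ⟨B, hB⟩ := exists_forall_le_of_continuousOn_Ici hf hf₀
  refine ⟨a, -(B * a), ha₀, fun R haR z hz => ?_⟩
  have hcomp : Continuous fun x => f √(x ^ 2 + z ^ 2) :=
    hf.comp_continuous (by fun_prop) fun x => Real.sqrt_nonneg _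
  have hnear : B * a ≤ ∫ x in (0 : ℝ)..a, f √(x ^ 2 + z ^ 2) := by
    simpa [mul_comm] using intervalIntegral.integral_mono_on ha₀.le
      (intervalIntegrable_const (c := B) (μ := volume)) (hcomp.intervalIntegrable 0 a)
      fun x _ => hB _ (Real.sqrt_nonneg _)
  have hfar := integral_sub_integral_norm_le_integral_comp_sqrt_sq_add_sq hf
    (fun x hx => (ha x hx).1) ha₀ haR hz
  rw [← intervalIntegral.integral_add_adjacent_intervals (hcomp.intervalIntegrable 0 a)
    (hcomp.intervalIntegrable a R)]
  linarith

theorem isEquivalent_sInf_integral_comp_sqrt_sq_add_sq {r : ℝ → ℝ}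
    (hf : ContinuousOn f (Ici 0)) (hf₀ : ∀ᶠ x in atTop, 0 ≤ f x)
    (hF : Tendsto (fun R => ∫ x in (0 : ℝ)..R, f x) atTop atTop) (hr₀ : ∀ R, 0 ≤ r R)
    (hr : ∀ a, 0 ≤ a → (fun R => ∫ t in (0 : ℝ)..r R + a, ‖f t‖) =o[atTop]
      fun R => ∫ x in (0 : ℝ)..R, f x) :
    (fun R => sInf ((fun z => ∫ x in (0 : ℝ)..R, f √(x ^ 2 + z ^ 2)) '' Icc 0 (r R))) ~[atTop]
      fun R => ∫ x in (0 : ℝ)..R, f x := by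
  have hloc : LocallyIntegrableOn f (Ici 0) := hf.locallyIntegrableOn measurableSet_Ici
  obtain ⟨a, C, ha, hlower⟩ := exists_sub_le_integral_comp_sqrt_sq_add_sq hf hf₀
  have hconst : (fun _ => C) =o[atTop] fun R => ∫ x in (0 : ℝ)..R, f x :=
    isLittleO_const_left.2 (Or.inr (tendsto_norm_atTop_atTop.comp hF))
  refine (IsBigO.of_norm_eventuallyLE ?_).trans_isLittleO ((hr a ha.le).add hconst)
  filter_upwards [eventually_ge_atTop a] with R hR
  have hbound : ∀ z ∈ Icc 0 (r R),
      (∫ x in (0 : ℝ)..R, f x) - (∫ x in (0 : ℝ)..r R + a, ‖f x‖) - C ≤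
      ∫ x in (0 : ℝ)..R, f √(x ^ 2 + z ^ 2) := fun z hz => by
    have hmono := monotoneOn_integral_norm hloc
      (add_nonneg hz.1 ha.le) (add_nonneg (hr₀ R) ha.le) (add_le_add_left hz.2 a)
    linarith [hlower R hR z hz.1]
  have hge := le_csInf ((nonempty_Icc.2 (hr₀ R)).image _) (forall_mem_image.2 hbound)
  have hzero : ∫ x in (0 : ℝ)..R, f √(x ^ 2 + 0 ^ 2) = ∫ x in (0 : ℝ)..R, f x := by
    refine intervalIntegral.integral_congr fun x hx => ?_
    rw [uIcc_of_le (ha.le.trans hR)] at hx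
    simp only [zero_pow two_ne_zero, add_zero, Real.sqrt_sq hx.1]
  have hle := (csInf_le ⟨_, forall_mem_image.2 hbound⟩
    (mem_image_of_mem _ (left_mem_Icc.2 (hr₀ R)))).trans_eq hzero
  rw [Pi.sub_apply, Real.norm_of_nonpos (sub_nonpos.2 hle)]
  linarith

end OffAxis

section LogPower

theorem hasDerivAt_inv_mul_log_rpow {p x : ℝ} (hp : p ≠ 0) (hx : 1 < x) :
    HasDerivAt (fun y => p⁻¹ * Real.log y ^ p) (x⁻¹ * Real.log x ^ (p - 1)) x := by
  have hpow := ((Real.hasDerivAt_log (by positivity)).rpow_const (p := p)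
    (Or.inl (Real.log_pos hx).ne')).const_mul p⁻¹
  exact hpow.congr_deriv (by field_simp)

theorem eventually_nonneg_inv_mul_log_rpow (q : ℝ) :
    ∀ᶠ x : ℝ in atTop, 0 ≤ x⁻¹ * Real.log x ^ q := by
  filter_upwards [eventually_ge_atTop 1] with x hx
  have := Real.log_nonneg hx
  positivity

theorem continuousOn_inv_mul_log_rpow (q : ℝ) :
    ContinuousOn (fun x => x⁻¹ * Real.log x ^ q) (Ioi 1) := fun x hx => by
  have hx₀ : x ≠ 0 := (one_pos.trans hx).ne'
  exact ((continuousAt_inv₀ hx₀).mul ((Real.continuousAt_log hx₀).rpow_const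
    (Or.inl (Real.log_pos hx).ne'))).continuousWithinAt

theorem tendsto_const_mul_log_rpow_atTop {c p : ℝ} (hc : 0 < c) (hp : 0 < p) :
    Tendsto (fun R => c * Real.log R ^ p) atTop atTop :=
  ((tendsto_rpow_atTop hp).comp Real.tendsto_log_atTop).const_mul_atTop hc

theorem isEquivalent_integral_inv_mul_log_rpow {a p : ℝ} (hp : 0 < p) (ha : 1 < a) :
    (fun R => ∫ x in a..R, x⁻¹ * Real.log x ^ (p - 1)) ~[atTop] fun R => p⁻¹ * Real.log R ^ p := by
  have htop := tendsto_const_mul_log_rpow_atTop (inv_pos.2 hp) hp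
  refine (IsEquivalent.refl.add_const_of_norm_tendsto_atTop (c := -(p⁻¹ * Real.log a ^ p))
    (tendsto_norm_atTop_atTop.comp htop)).congr_left ?_
  filter_upwards [eventually_ge_atTop a] with R hR
  have hcont : ContinuousOn (fun x => x⁻¹ * Real.log x ^ (p - 1)) (Icc a R) :=
    (continuousOn_inv_mul_log_rpow _).mono fun x hx => ha.trans_le hx.1
  rw [← sub_eq_add_neg, intervalIntegral.integral_eq_sub_of_hasDerivAt (fun x hx =>
    hasDerivAt_inv_mul_log_rpow hp.ne' (ha.trans_le (uIcc_of_le hR ▸ hx).1))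
    (hcont.intervalIntegrable_of_Icc hR)]

theorem isEquivalent_integral_of_isEquivalent_inv_mul_log_rpow {f : ℝ → ℝ} {p : ℝ} (hp : 0 < p)
    (hf : LocallyIntegrableOn f (Ici 0))
    (hasymp : f ~[atTop] fun x => x⁻¹ * Real.log x ^ (p - 1)) :
    (fun R => ∫ x in (0 : ℝ)..R, f x) ~[atTop] fun R => p⁻¹ * Real.log R ^ p := by
  have hmodel := isEquivalent_integral_inv_mul_log_rpow hp one_lt_two
  have htop := tendsto_const_mul_log_rpow_atTop (inv_pos.2 hp) hp
  have hloc : LocallyIntegrableOn (fun x => x⁻¹ * Real.log x ^ (p - 1)) (Ici 2) :=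
    ((continuousOn_inv_mul_log_rpow _).mono (Ici_subset_Ioi.2 one_lt_two)).locallyIntegrableOn
      measurableSet_Ici
  have htail := (isEquivalent_integral (hf.mono_set (Ici_subset_Ici.2 zero_le_two)) hloc hasymp
    (eventually_nonneg_inv_mul_log_rpow _) (hmodel.symm.tendsto_atTop htop)).trans hmodel
  refine (htail.const_add_of_norm_tendsto_atTop (c := ∫ x in (0 : ℝ)..2, f x)
    (tendsto_norm_atTop_atTop.comp htop)).congr_left ?_
  filter_upwards [eventually_ge_atTop 2] with R hR
  exact intervalIntegral.integral_add_adjacent_intervals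
    (intervalIntegrable_of_locallyIntegrableOn_Ici hf le_rfl zero_le_two)
    (intervalIntegrable_of_locallyIntegrableOn_Ici hf zero_le_two (zero_le_two.trans hR))

theorem isLittleO_integral_norm_of_isEquivalent_inv_mul_log_rpow {f r : ℝ → ℝ} {p a : ℝ}
    (hp : 0 < p) (hf : LocallyIntegrableOn f (Ici 0))
    (hasymp : f ~[atTop] fun x => x⁻¹ * Real.log x ^ (p - 1)) (hr₀ : ∀ R, 0 ≤ r R)
    (hr : Tendsto (fun R => Real.log (max (r R) 2) / Real.log R) atTop (𝓝 0)) (ha : 0 ≤ a) :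
    (fun R => ∫ t in (0 : ℝ)..r R + a, ‖f t‖) =o[atTop] fun R => ∫ x in (0 : ℝ)..R, f x := by
  have hI := isEquivalent_integral_of_isEquivalent_inv_mul_log_rpow hp hf hasymp
  have hItop := hI.symm.tendsto_atTop (tendsto_const_mul_log_rpow_atTop (inv_pos.2 hp) hp)
  have hnorm := isEquivalent_integral_norm hf
    (hasymp.eventually_nonneg (eventually_nonneg_inv_mul_log_rpow _)) hItop
  exact (isLittleO_comp_of_isEquivalent_log_rpow hp (hnorm.trans hI) (monotoneOn_integral_norm hf)
    (fun x hx => intervalIntegral.integral_nonneg hx fun _ _ => norm_nonneg _)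
    (fun R => add_nonneg (hr₀ R) ha)
    fun ε hε => eventually_add_const_le_rpow hr a hε).trans_isEquivalent hnorm

end LogPower

/-- let `γ < 1`, let `h : [0,∞) → ℝ` be continuous with
`h(x) ∼ x⁻¹ (log x)^(-γ)` as `x → ∞`, and let `r : (0,∞) → [0,∞)` satisfy `r(R) = R^{o(1)}`
(i.e. `log(max(r R, 2)) / log R → 0`). Then, as `R → ∞`,
`(1/(2R)) ∫₀^R ∫₀^R h(|x-y|) 1_{|x-y| ≥ r R} dx dy ∼ ∫₀^R h(x) dx` and
`min_{z ∈ [0, r R]} ∫₀^R h(√(x² + z²)) dx ∼ ∫₀^R h(x) dx`. -/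
theorem statement3 (γ : ℝ) (hγ : γ < 1) (h : ℝ → ℝ)
    (hcont : ContinuousOn h (Set.Ici 0))
    (hasymp : Tendsto (fun x => h x / (x⁻¹ * Real.log x ^ (-γ))) atTop (nhds 1))
    (r : ℝ → ℝ) (hr0 : ∀ R : ℝ, 0 ≤ r R)
    (hro : Tendsto (fun R => Real.log (max (r R) 2) / Real.log R) atTop (nhds 0)) :
    Tendsto (fun R =>
        ((1 / (2 * R)) * ∫ x in (0:ℝ)..R, ∫ y in (0:ℝ)..R,
            (if r R ≤ |x - y| then h |x - y| else 0)) /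
          (∫ x in (0:ℝ)..R, h x)) atTop (nhds 1)
    ∧ Tendsto (fun R =>
        (sInf ((fun z => ∫ x in (0:ℝ)..R, h (Real.sqrt (x ^ 2 + z ^ 2))) ''
            Set.Icc 0 (r R))) /
          (∫ x in (0:ℝ)..R, h x)) atTop (nhds 1) := by
  have hloc : LocallyIntegrableOn h (Ici 0) := hcont.locallyIntegrableOn measurableSet_Ici
  have hp : 0 < 1 - γ := sub_pos.2 hγ
  have hequiv : h ~[atTop] fun x => x⁻¹ * Real.log x ^ (1 - γ - 1) := by
    simpa only [sub_sub_cancel_left] using isEquivalent_of_tendsto_one hasymp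
  have hh₀ : ∀ᶠ x in atTop, 0 ≤ h x :=
    hequiv.eventually_nonneg (eventually_nonneg_inv_mul_log_rpow _)
  have hI := isEquivalent_integral_of_isEquivalent_inv_mul_log_rpow hp hloc hequiv
  have hItop := hI.symm.tendsto_atTop (tendsto_const_mul_log_rpow_atTop (inv_pos.2 hp) hp)
  have hslow := (isSlowlyVarying_const_mul_log_rpow _ _).congr hI
  have hsmall := fun a => isLittleO_integral_norm_of_isEquivalent_inv_mul_log_rpow (a := a) hp hloc
    hequiv hr0 hro
  have hne := hItop.eventually_ne_atTop 0
  exact ⟨(isEquivalent_iff_tendsto_one hne).1 (isEquivalent_truncated_average hloc hh₀ hItop hslow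
      hr0 (by simpa only [add_zero] using hsmall 0 le_rfl)),
    (isEquivalent_iff_tendsto_one hne).1
      (isEquivalent_sInf_integral_comp_sqrt_sq_add_sq hcont hh₀ hItop hr0 hsmall)⟩
end

section
/- Let d ≥ 2 and let K : ℝ^d → ℝ be a continuous, isotropic, positive definite function which is not identically zero, and suppose that the restriction of K to a line, x ↦ K(x e₁) for x ∈ ℝ (where e₁ is a unit vector), is absolutely integrable over ℝ. Then ∫₀^∞ K(x e₁) dx > 0. -/
open MeasureTheory

/-- A kernel `K : ℝ^d → ℝ` is positive definite if all quadratic forms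
`∑ i j, c i * c j * K (x i - x j)` are nonnegative. -/
def IsPosDefKernel {d : ℕ} (K : EuclideanSpace ℝ (Fin d) → ℝ) : Prop :=
  ∀ (n : ℕ) (x : Fin n → EuclideanSpace ℝ (Fin d)) (c : Fin n → ℝ),
    0 ≤ ∑ i : Fin n, ∑ j : Fin n, c i * c j * K (x i - x j)

/-- A kernel is isotropic if it only depends on the Euclidean norm. -/
def IsIsotropic {d : ℕ} (K : EuclideanSpace ℝ (Fin d) → ℝ) : Prop :=
  ∀ x y : EuclideanSpace ℝ (Fin d), ‖x‖ = ‖y‖ → K x = K y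

/-!
Let `X` and `Y` be independent samples of a probability measure `μ` on `E`. Averaging the quadratic
form of the kernel over `n` independent samples, with all weights equal to `1`, and letting `n → ∞`
gives `𝔼 k (c * ‖X - Y‖) ≥ 0` for every dilation factor `c > 0`. On the other hand, the substitution
`r = c * ‖X - Y‖` yields
`∫ c in (0, ∞), c ^ (s - 1) * 𝔼 k (c * ‖X - Y‖) =
  𝔼 ‖X - Y‖ ^ (-s) * ∫ r in (0, ∞), r ^ (s - 1) * k r`.
The left side is positive, because the expectation tends to `k 0 > 0` as `c → 0`. It remains to find
`μ` with finite Riesz energy `𝔼 ‖X - Y‖ ^ (-s)`: the uniform distribution on a ball works as soon as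
`s < dim E`, and the case of a line integral is `s = 1`, whence `d ≥ 2`.
-/

open Filter Metric Module ProbabilityTheory Set Topology

theorem setIntegral_Ioi_pos_of_eventually_pos {f : ℝ → ℝ} {a : ℝ} (hf : IntegrableOn f (Ioi a))
    (hnonneg : ∀ x > a, 0 ≤ f x) (hpos : ∀ᶠ x in 𝓝[>] a, 0 < f x) :
    0 < ∫ x in Ioi a, f x := by
  obtain ⟨b, hab, hb⟩ := mem_nhdsGT_iff_exists_Ioo_subset.1 hpos
  rw [setIntegral_pos_iff_support_of_nonneg_ae
    (ae_restrict_of_forall_mem measurableSet_Ioi hnonneg) hf]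
  have hsub : Ioo a b ⊆ Function.support f ∩ Ioi a := fun x hx => ⟨(hb hx).ne', hx.1⟩
  have hvol : 0 < volume (Ioo a b) := by simpa using hab
  exact hvol.trans_le (measure_mono hsub)

theorem measurePreserving_eval_prodMk {ι : Type*} [Fintype ι] {α : ι → Type*}
    [∀ i, MeasurableSpace (α i)] (μ : ∀ i, Measure (α i)) [∀ i, IsProbabilityMeasure (μ i)]
    {i j : ι} (hij : i ≠ j) :
    MeasurePreserving (fun x : ∀ i, α i => (x i, x j)) (Measure.pi μ) ((μ i).prod (μ j)) := by
  have hindep : IndepFun (fun x : ∀ i, α i => x i) (fun x => x j) (Measure.pi μ) :=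
    (iIndepFun_pi (X := fun _ x => x) fun _ => aemeasurable_id).indepFun hij
  refine ⟨by fun_prop, ?_⟩
  rw [hindep.map_prod_eq_prod_map_map (measurable_pi_apply i).aemeasurable
    (measurable_pi_apply j).aemeasurable,
    (measurePreserving_eval μ i).map_eq, (measurePreserving_eval μ j).map_eq]

section IndependentSamples

variable {α : Type*} [MeasurableSpace α] {μ : Measure α} [IsProbabilityMeasure μ] {L : α → α → ℝ}

theorem integral_sum_sum_pi {ι : Type*} [Fintype ι] (hdiag : Integrable (fun x => L x x) μ)
    (hL : Integrable (fun p : α × α => L p.1 p.2) (μ.prod μ)) :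
    ∫ x : ι → α, ∑ i, ∑ j, L (x i) (x j) ∂Measure.pi (fun _ => μ) =
      Fintype.card ι * (∫ x, L x x ∂μ + (Fintype.card ι - 1) * ∫ p, L p.1 p.2 ∂μ.prod μ) := by
  classical
  have hterm (i j : ι) : Integrable (fun x : ι → α => L (x i) (x j)) (Measure.pi fun _ => μ) ∧
      ∫ x : ι → α, L (x i) (x j) ∂Measure.pi (fun _ => μ) =
        (if i = j then ∫ x, L x x ∂μ - ∫ p, L p.1 p.2 ∂μ.prod μ else 0) +
          ∫ p, L p.1 p.2 ∂μ.prod μ := by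
    split_ifs with hij
    · subst hij
      have hi := measurePreserving_eval (fun _ : ι => μ) i
      refine ⟨hi.integrable_comp_of_integrable hdiag, ?_⟩
      rw [sub_add_cancel]
      exact hi.hasLaw.integral_comp hdiag.1
    · have hi := measurePreserving_eval_prodMk (fun _ : ι => μ) hij
      refine ⟨hi.integrable_comp_of_integrable hL, ?_⟩
      rw [zero_add]
      exact hi.hasLaw.integral_comp hL.1
  rw [integral_finsetSum _ fun i _ => integrable_finsetSum _ fun j _ => (hterm i j).1]
  simp_rw [integral_finsetSum _ fun j _ => (hterm _ j).1, (hterm _ _).2]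
  simp_rw [Finset.sum_add_distrib, Finset.sum_ite_eq, Finset.mem_univ, if_true,
    Finset.sum_const, Finset.card_univ, nsmul_eq_mul]
  ring

theorem integral_prod_nonneg_of_sum_nonneg (hdiag : Integrable (fun x => L x x) μ)
    (hL : Integrable (fun p : α × α => L p.1 p.2) (μ.prod μ))
    (hsum : ∀ (n : ℕ) (x : Fin n → α), 0 ≤ ∑ i, ∑ j, L (x i) (x j)) :
    0 ≤ ∫ p, L p.1 p.2 ∂μ.prod μ := by
  by_contra! hneg
  obtain ⟨n, hn⟩ := exists_nat_gt ((∫ x, L x x ∂μ) / -∫ p, L p.1 p.2 ∂μ.prod μ)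
  have hmean : 0 ≤ ∫ x : Fin (n + 1) → α, ∑ i, ∑ j, L (x i) (x j) ∂Measure.pi (fun _ => μ) :=
    integral_nonneg fun x => hsum (n + 1) x
  rw [integral_sum_sum_pi hdiag hL, Fintype.card_fin, Nat.cast_succ, add_sub_cancel_right,
    mul_nonneg_iff_of_pos_left (by positivity)] at hmean
  rw [div_lt_iff₀ (neg_pos.2 hneg)] at hn
  linarith

end IndependentSamples

section Scaling

variable {k : ℝ → ℝ} {s : ℝ}

theorem rpow_mul_comp_mul_right {c d : ℝ} (hc : 0 < c) (hd : 0 < d) :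
    c ^ (s - 1) * k (c * d) = d ^ (1 - s) * ((c * d) ^ (s - 1) * k (c * d)) := by
  rw [Real.mul_rpow hc.le hd.le, ← neg_sub s 1, Real.rpow_neg hd.le]
  have := Real.rpow_pos_of_pos hd (s - 1)
  field_simp

theorem integrableOn_rpow_mul_comp_mul_right {d : ℝ} (hd : 0 < d)
    (hint : IntegrableOn (fun r => r ^ (s - 1) * k r) (Ioi 0)) :
    IntegrableOn (fun c => c ^ (s - 1) * k (c * d)) (Ioi 0) := by
  have hscaled := (integrableOn_Ioi_comp_mul_right_iff (fun r => r ^ (s - 1) * k r) 0 hd).2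
    (by rwa [zero_mul])
  exact IntegrableOn.congr_fun (hscaled.const_mul (d ^ (1 - s)))
    (fun c hc => (rpow_mul_comp_mul_right hc hd).symm) measurableSet_Ioi

theorem integral_rpow_mul_comp_mul_right {d : ℝ} (hd : 0 < d) :
    ∫ c in Ioi 0, c ^ (s - 1) * k (c * d) = d ^ (-s) * ∫ r in Ioi 0, r ^ (s - 1) * k r := by
  rw [setIntegral_congr_fun measurableSet_Ioi fun c hc => rpow_mul_comp_mul_right hc hd,
    integral_const_mul, integral_comp_mul_right_Ioi (fun r => r ^ (s - 1) * k r) 0 hd, zero_mul,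
    smul_eq_mul, ← mul_assoc, ← Real.rpow_neg_one d, ← Real.rpow_add hd]
  ring_nf

variable {Ω : Type*} [MeasurableSpace Ω] {μ : Measure Ω} [SFinite μ] {D : Ω → ℝ}

theorem integrable_prod_rpow_mul_comp_mul (hk : Measurable k) (hD : Measurable D)
    (hDpos : ∀ᵐ ω ∂μ, 0 < D ω) (hDint : Integrable (fun ω => D ω ^ (-s)) μ)
    (hint : IntegrableOn (fun r => r ^ (s - 1) * k r) (Ioi 0)) :
    Integrable (fun p : ℝ × Ω => p.1 ^ (s - 1) * k (p.1 * D p.2))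
      ((volume.restrict (Ioi 0)).prod μ) := by
  have hmeas : Measurable fun p : ℝ × Ω => p.1 ^ (s - 1) * k (p.1 * D p.2) := by fun_prop
  rw [integrable_prod_iff' hmeas.aestronglyMeasurable]
  constructor
  · filter_upwards [hDpos] with ω hω using integrableOn_rpow_mul_comp_mul_right hω hint
  · refine (hDint.mul_const (∫ r in Ioi 0, r ^ (s - 1) * |k r|)).congr ?_
    filter_upwards [hDpos] with ω hω
    rw [← integral_rpow_mul_comp_mul_right (k := fun r => |k r|) hω]
    refine setIntegral_congr_fun measurableSet_Ioi fun c (hc : 0 < c) => ?_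
    simp only [norm_mul, Real.norm_eq_abs, abs_of_pos (Real.rpow_pos_of_pos hc _)]

theorem integral_rpow_mul_integral_comp_mul (hk : Measurable k) (hD : Measurable D)
    (hDpos : ∀ᵐ ω ∂μ, 0 < D ω) (hDint : Integrable (fun ω => D ω ^ (-s)) μ)
    (hint : IntegrableOn (fun r => r ^ (s - 1) * k r) (Ioi 0)) :
    ∫ c in Ioi 0, c ^ (s - 1) * ∫ ω, k (c * D ω) ∂μ =
      (∫ ω, D ω ^ (-s) ∂μ) * ∫ r in Ioi 0, r ^ (s - 1) * k r := by
  simp_rw [← integral_mul_const, ← integral_const_mul (_ ^ (s - 1))]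
  rw [integral_integral_swap (integrable_prod_rpow_mul_comp_mul hk hD hDpos hDint hint)]
  refine integral_congr_ae ?_
  filter_upwards [hDpos] with ω hω using integral_rpow_mul_comp_mul_right hω

end Scaling

theorem tendsto_integral_comp_mul_nhdsGT_zero {Ω : Type*} [MeasurableSpace Ω] {μ : Measure Ω}
    [IsProbabilityMeasure μ] {k : ℝ → ℝ} {D : Ω → ℝ} {C : ℝ} (hk : Continuous k)
    (hD : Measurable D) (hDnonneg : ∀ ω, 0 ≤ D ω) (hC : ∀ r, 0 ≤ r → |k r| ≤ C) :
    Tendsto (fun c => ∫ ω, k (c * D ω) ∂μ) (𝓝[>] 0) (𝓝 (k 0)) := by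
  have hlim : Tendsto (fun c => ∫ ω, k (c * D ω) ∂μ) (𝓝[>] 0) (𝓝 (∫ _, k 0 ∂μ)) := by
    refine tendsto_integral_filter_of_dominated_convergence (fun _ => C)
      (.of_forall fun c => (by fun_prop : Measurable _).aestronglyMeasurable) ?_
      (integrable_const C) (ae_of_all _ fun ω => ?_)
    · filter_upwards [self_mem_nhdsWithin] with c hc
      exact ae_of_all _ fun ω => hC _ (mul_nonneg (le_of_lt hc) (hDnonneg ω))
    · have hcont : Continuous fun c => k (c * D ω) := by fun_prop
      simpa using (hcont.tendsto 0).mono_left nhdsWithin_le_nhds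
  simpa using hlim

theorem ae_prod_ne {α : Type*} [MeasurableSpace α] [MeasurableEq α] (μ ν : Measure α) [SFinite ν]
    [NullSingletonClass ν] : ∀ᵐ p ∂μ.prod ν, p.1 ≠ p.2 := by
  refine (Measure.ae_prod_iff_ae_ae measurableSet_diagonal.compl).2 ?_
  exact ae_of_all _ fun x => (ν.ae_ne x).mono fun _ => Ne.symm

section RieszEnergy

variable {E : Type*} [NormedAddCommGroup E] [NormedSpace ℝ E] [FiniteDimensional ℝ E]
  [Nontrivial E] [MeasurableSpace E] [BorelSpace E] {s : ℝ}

theorem integrableOn_ball_prod_ball_norm_sub_rpow_neg (ν : Measure E) [ν.IsAddHaarMeasure]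
    (hs : s < finrank ℝ E) (r : ℝ) :
    IntegrableOn (fun p : E × E => ‖p.1 - p.2‖ ^ (-s)) (ball 0 r ×ˢ ball 0 r) (ν.prod ν) := by
  have hball : IntegrableOn (fun z : E => ‖z‖ ^ (-s)) (ball 0 (r + r)) ν :=
    integrableOn_ball_of_norm_le_rpow (C := 1) finrank_pos hs
      (ae_of_all _ fun z => by rw [Real.norm_of_nonneg (by positivity), one_mul])
      (by fun_prop : Measurable _).aestronglyMeasurable
  have hprod : IntegrableOn (fun q : E × E => ‖q.1‖ ^ (-s)) (ball 0 (r + r) ×ˢ ball 0 r)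
      (ν.prod ν) := by
    have : IsFiniteMeasure (ν.restrict (ball (0 : E) r)) := ⟨by simpa using measure_ball_lt_top⟩
    rw [IntegrableOn, ← Measure.prod_restrict]
    exact hball.integrable.comp_fst _
  have hshear := measurePreserving_sub_prod ν ν
  refine ((hshear.restrict_preimage (measurableSet_ball.prod measurableSet_ball)
    ).integrable_comp_of_integrable hprod).mono_measure (Measure.restrict_mono ?_ le_rfl)
  rintro ⟨x, y⟩ ⟨hx, hy⟩
  simp only [mem_ball_zero_iff] at hx hy
  exact ⟨mem_ball_zero_iff.2 ((norm_sub_le x y).trans_lt (add_lt_add hx hy)),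
    mem_ball_zero_iff.2 hy⟩

theorem exists_isProbabilityMeasure_integrable_norm_sub_rpow_neg (hs : s < finrank ℝ E) :
    ∃ μ : Measure E, IsProbabilityMeasure μ ∧ NullSingletonClass μ ∧
      Integrable (fun p : E × E => ‖p.1 - p.2‖ ^ (-s)) (μ.prod μ) := by
  let ν : Measure E := Measure.addHaar
  have hpos : ν (ball 0 1) ≠ 0 := (measure_ball_pos ν 0 one_pos).ne'
  refine ⟨ν[|ball 0 1], cond_isProbabilityMeasure_of_finite hpos measure_ball_lt_top.ne,
    ⟨fun x => cond_absolutelyContinuous (measure_singleton x)⟩, ?_⟩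
  rw [ProbabilityTheory.cond, Measure.prod_smul_left, Measure.prod_smul_right,
    Measure.prod_restrict]
  exact ((integrableOn_ball_prod_ball_norm_sub_rpow_neg ν hs 1).smul_measure
    (ENNReal.inv_ne_top.2 hpos)).smul_measure (ENNReal.inv_ne_top.2 hpos)

end RieszEnergy

theorem IsIsotropic.apply_norm_smul {d : ℕ} {K : EuclideanSpace ℝ (Fin d) → ℝ}
    (hiso : IsIsotropic K) {e : EuclideanSpace ℝ (Fin d)} (he : ‖e‖ = 1)
    (x : EuclideanSpace ℝ (Fin d)) : K (‖x‖ • e) = K x :=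
  hiso _ _ (by simp [norm_smul, he])

/-- The radial function `x ↦ k ‖x‖` is positive definite on `E`; only the values of `k` on
`[0, ∞)` matter. For `E = ℝ^d` this is Schoenberg's class `Φ_d`, up to normalization. -/
def IsRadialPosDef (E : Type*) [NormedAddCommGroup E] (k : ℝ → ℝ) : Prop :=
  ∀ (n : ℕ) (x : Fin n → E) (c : Fin n → ℝ), 0 ≤ ∑ i, ∑ j, c i * c j * k ‖x i - x j‖

theorem IsPosDefKernel.isRadialPosDef {d : ℕ} {K : EuclideanSpace ℝ (Fin d) → ℝ}
    (hpd : IsPosDefKernel K) (hiso : IsIsotropic K) {e : EuclideanSpace ℝ (Fin d)}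
    (he : ‖e‖ = 1) : IsRadialPosDef (EuclideanSpace ℝ (Fin d)) fun r => K (r • e) := by
  intro n x c
  simpa only [hiso.apply_norm_smul he] using hpd n x c

namespace IsRadialPosDef

variable {E : Type*} [NormedAddCommGroup E] [NormedSpace ℝ E] {k : ℝ → ℝ}

theorem abs_le_apply_zero [Nontrivial E] (hpd : IsRadialPosDef E k) {r : ℝ} (hr : 0 ≤ r) :
    |k r| ≤ k 0 := by
  obtain ⟨x, rfl⟩ := exists_norm_eq E hr
  have hadd := hpd 2 ![x, 0] ![1, 1]
  have hsub := hpd 2 ![x, 0] ![1, -1]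
  simp only [Fin.sum_univ_two, Matrix.cons_val_zero, Matrix.cons_val_one, sub_self, sub_zero,
    zero_sub, norm_neg, norm_zero] at hadd hsub
  rw [abs_le]
  constructor <;> linarith

theorem integral_comp_mul_norm_sub_nonneg [Nontrivial E] [MeasurableSpace E] [BorelSpace E]
    [SecondCountableTopology E] {μ : Measure E} [IsProbabilityMeasure μ] (hk : Continuous k)
    (hpd : IsRadialPosDef E k) {c : ℝ} (hc : 0 ≤ c) :
    0 ≤ ∫ p, k (c * ‖p.1 - p.2‖) ∂μ.prod μ := by
  refine integral_prod_nonneg_of_sum_nonneg (L := fun x y => k (c * ‖x - y‖)) (by simp) ?_ ?_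
  · exact .of_bound (by fun_prop : Measurable _).aestronglyMeasurable (k 0)
      (ae_of_all _ fun p => hpd.abs_le_apply_zero (by positivity))
  · intro n x
    simpa [← smul_sub, norm_smul, abs_of_nonneg hc] using hpd n (fun i => c • x i) 1

/- Since `0 ^ (-s) = 0` for `s ≠ 0`, finite energy alone does not rule out atoms of `μ`. -/
theorem integral_rpow_mul_pos [Nontrivial E] [MeasurableSpace E] [BorelSpace E]
    [SecondCountableTopology E] {μ : Measure E} [IsProbabilityMeasure μ] [NullSingletonClass μ]
    {s : ℝ} (hpd : IsRadialPosDef E k) (hk : Continuous k) (hk0 : 0 < k 0)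
    (hμ : Integrable (fun p : E × E => ‖p.1 - p.2‖ ^ (-s)) (μ.prod μ))
    (hint : IntegrableOn (fun r => r ^ (s - 1) * k r) (Ioi 0)) :
    0 < ∫ r in Ioi 0, r ^ (s - 1) * k r := by
  have hdist : Measurable fun p : E × E => ‖p.1 - p.2‖ := by fun_prop
  have hdist_pos : ∀ᵐ p ∂μ.prod μ, 0 < ‖p.1 - p.2‖ :=
    (ae_prod_ne μ μ).mono fun p hp => norm_sub_pos_iff.2 hp
  have hmean_int : IntegrableOn
      (fun c => c ^ (s - 1) * ∫ p, k (c * ‖p.1 - p.2‖) ∂μ.prod μ) (Ioi 0) := by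
    simpa only [IntegrableOn, integral_const_mul] using
      (integrable_prod_rpow_mul_comp_mul hk.measurable hdist hdist_pos hμ hint).integral_prod_left
  have hmean_pos : ∀ᶠ c in 𝓝[>] 0, 0 < ∫ p, k (c * ‖p.1 - p.2‖) ∂μ.prod μ :=
    (tendsto_integral_comp_mul_nhdsGT_zero hk hdist (fun _ => norm_nonneg _)
      fun _ => hpd.abs_le_apply_zero).eventually_const_lt hk0
  have hpos : 0 < ∫ c in Ioi 0, c ^ (s - 1) * ∫ p, k (c * ‖p.1 - p.2‖) ∂μ.prod μ := by
    refine setIntegral_Ioi_pos_of_eventually_pos hmean_int (fun c hc => ?_) ?_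
    · exact mul_nonneg (Real.rpow_nonneg hc.le _) (hpd.integral_comp_mul_norm_sub_nonneg hk hc.le)
    · filter_upwards [hmean_pos, self_mem_nhdsWithin] with c hc hc0
      exact mul_pos (Real.rpow_pos_of_pos hc0 _) hc
  rw [integral_rpow_mul_integral_comp_mul hk.measurable hdist hdist_pos hμ hint] at hpos
  exact pos_of_mul_pos_right hpos (integral_nonneg fun p => by positivity)

end IsRadialPosDef

theorem statement5_general {E : Type*} [NormedAddCommGroup E] [NormedSpace ℝ E] {k : ℝ → ℝ}
    {s : ℝ} (hs : 0 < s) (hsE : s < finrank ℝ E) (hk : Continuous k) (hpd : IsRadialPosDef E k)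
    (hne : ¬ EqOn k 0 (Ici 0)) (hint : IntegrableOn (fun r => r ^ (s - 1) * k r) (Ioi 0)) :
    0 < ∫ r in Ioi 0, r ^ (s - 1) * k r := by
  borelize E
  have hrank : 0 < finrank ℝ E := Nat.cast_pos.1 (hs.trans hsE)
  have := Module.finite_of_finrank_pos hrank
  have := Module.nontrivial_of_finrank_pos hrank
  have hk0 : 0 < k 0 := by
    by_contra! h
    exact hne fun r hr => abs_nonpos_iff.1 ((hpd.abs_le_apply_zero hr).trans h)
  obtain ⟨μ, _, _, hμ⟩ := exists_isProbabilityMeasure_integrable_norm_sub_rpow_neg hsE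
  exact hpd.integral_rpow_mul_pos hk hk0 hμ hint

/-- if `d ≥ 2` and `K : ℝ^d → ℝ` is a non-zero continuous isotropic positive
definite kernel whose restriction to a line is absolutely integrable, then
`∫₀^∞ K(x e₁) dx > 0` for a unit vector `e₁`. -/
theorem statement5 (d : ℕ) (hd : 2 ≤ d)
    (K : EuclideanSpace ℝ (Fin d) → ℝ) (hcont : Continuous K)
    (hiso : IsIsotropic K) (hpd : IsPosDefKernel K) (hne : K ≠ 0)
    (e : EuclideanSpace ℝ (Fin d)) (he : ‖e‖ = 1)
    (hint : Integrable (fun x : ℝ => K (x • e))) :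
    0 < ∫ x in Set.Ioi (0:ℝ), K (x • e) := by
  have hne' : ¬ EqOn (fun r : ℝ => K (r • e)) 0 (Ici 0) := fun hzero =>
    hne (funext fun x => hiso.apply_norm_smul he x ▸ hzero (norm_nonneg x))
  have hfinrank : (1 : ℝ) < finrank ℝ (EuclideanSpace ℝ (Fin d)) := by
    simpa using Nat.lt_of_succ_le hd
  simpa using statement5_general (s := 1) one_pos hfinrank (by fun_prop)
    (hpd.isRadialPosDef hiso he) hne' (by simpa using hint.integrableOn)
end

section
/- Let K : ℝ → ℝ be even, continuous and positive definite, regularly varying (at infinity) with index α > 1 (so that ∫₀^∞ |K(x)| dx < ∞), and suppose ∫₀^∞ K(x) dx > 0. Then, as R → ∞, Cap_K([0,R]) ∼ R / (2 ∫₀^∞ K(x) dx). -/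
open Filter MeasureTheory

/-- A kernel `K : ℝ → ℝ` is positive definite if all quadratic forms
`∑ i j, c i * c j * K (x i - x j)` are nonnegative. -/
def IsPosDefKernel1 (K : ℝ → ℝ) : Prop :=
  ∀ (n : ℕ) (x : Fin n → ℝ) (c : Fin n → ℝ),
    0 ≤ ∑ i : Fin n, ∑ j : Fin n, c i * c j * K (x i - x j)

/-- The energy `E_K(μ) = ∫∫ K(x-y) dμ(x) dμ(y)`. -/
noncomputable def energy1 (K : ℝ → ℝ) (μ : Measure ℝ) : ℝ :=
  ∫ x, ∫ y, K (x - y) ∂μ ∂μ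

/-- The capacity of `D` with respect to `K`: the reciprocal of the minimal energy of a
Borel probability measure supported on `D`. -/
noncomputable def capacity1 (K : ℝ → ℝ) (D : Set ℝ) : ℝ :=
  (sInf {e : ℝ | ∃ μ : Measure ℝ, IsProbabilityMeasure μ ∧ μ Dᶜ = 0 ∧ e = energy1 K μ})⁻¹

/-!
Let `P t = ∫ u in 0..t, K u`, which tends to `I = ∫₀^∞ K`. For an even kernel the potential of the
uniform probability measure `ν` on an interval of length `N` is `N⁻¹ (P s + P s')` at a point at
distances `s` and `s'` from the endpoints, and the energy of `ν` is `2 N⁻¹` times the mean of `P`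
over `[0, N]`, hence asymptotic to `2 I / N`. Taking the interval to be `[0, R]` bounds the minimal
energy from above.

For the lower bound let `ν` be uniform on `[-M, R + M]`, so that its potential is almost `2 I / N`
or more on all of `[0, R]`, not only away from the endpoints. Positive definiteness, in the form
`2 ⟨μ, ν⟩ ≤ E(μ) + E(ν)`, then gives `E(μ) ≥ 2 (2 I / N) - 2 I / N` up to lower order terms, for
every probability measure `μ` on `[0, R]`.
-/

open scoped Topology ProbabilityTheory

lemma tendsto_div_add_const_atTop (c : ℝ) : Tendsto (fun R : ℝ => R / (R + c)) atTop (𝓝 1) := by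
  have hlim : Tendsto (fun R : ℝ => 1 - c / (R + c)) atTop (𝓝 (1 - 0)) :=
    ((tendsto_atTop_add_const_right _ c tendsto_id).const_div_atTop c).const_sub 1
  rw [sub_zero] at hlim
  refine hlim.congr' ?_
  filter_upwards [eventually_gt_atTop (-c)] with R hR
  have hne : R + c ≠ 0 := by linarith
  field_simp
  ring

section Integrals

variable {E : Type*} [NormedAddCommGroup E]

lemma exists_norm_le_of_continuous_of_tendsto_atTop {f : ℝ → E} {l : E} (hf : Continuous f)
    (hl : Tendsto f atTop (𝓝 l)) (a : ℝ) : ∃ C, ∀ t, a ≤ t → ‖f t‖ ≤ C := by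
  obtain ⟨b, hb⟩ := eventually_atTop.1 (hl.norm.eventually_le_const (lt_add_one ‖l‖))
  obtain ⟨B, hB⟩ := (isCompact_Icc (a := a) (b := b)).exists_bound_of_continuousOn hf.continuousOn
  refine ⟨max (‖l‖ + 1) B, fun t hat => ?_⟩
  rcases le_total b t with hbt | htb
  · exact (hb t hbt).trans (le_max_left _ _)
  · exact (hB t ⟨hat, htb⟩).trans (le_max_right _ _)

variable [NormedSpace ℝ E]

lemma integral_comp_simpleFunc [CompleteSpace E] {Ω β : Type*} [MeasurableSpace Ω]
    (φ : SimpleFunc Ω β) (μ : Measure Ω) [IsFiniteMeasure μ] (f : β → E) :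
    ∫ ω, f (φ ω) ∂μ = ∑ b ∈ φ.range, μ.real (φ ⁻¹' {b}) • f b := by
  classical
  have hsum (ω : Ω) : f (φ ω) = ∑ b ∈ φ.range, (φ ⁻¹' {b}).indicator (fun _ => f b) ω := by
    simp [Set.indicator_apply]
  simp only [hsum]
  rw [integral_finsetSum _ fun b _ => (integrable_const _).indicator (φ.measurableSet_fiber b)]
  exact Finset.sum_congr rfl fun b _ => integral_indicator_const _ (φ.measurableSet_fiber b)

lemma tendsto_integral_integral_of_norm_le_const {X Y : Type*} [MeasurableSpace X]
    [MeasurableSpace Y] {σ : Measure X} {τ : Measure Y} [IsFiniteMeasure σ] [IsFiniteMeasure τ]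
    {F : ℕ → X → Y → E} {G : X → Y → E} (C : ℝ)
    (hF : ∀ n, StronglyMeasurable (Function.uncurry (F n))) (hC : ∀ n x y, ‖F n x y‖ ≤ C)
    (hlim : ∀ x y, Tendsto (fun n => F n x y) atTop (𝓝 (G x y))) :
    Tendsto (fun n => ∫ x, ∫ y, F n x y ∂τ ∂σ) atTop (𝓝 (∫ x, ∫ y, G x y ∂τ ∂σ)) := by
  have hFint (n : ℕ) : Integrable (Function.uncurry (F n)) (σ.prod τ) :=
    .of_bound (hF n).aestronglyMeasurable C (.of_forall fun p => hC n p.1 p.2)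
  have hG : StronglyMeasurable (Function.uncurry G) :=
    stronglyMeasurable_of_tendsto atTop hF (tendsto_pi_nhds.2 fun p => hlim p.1 p.2)
  have hGint : Integrable (Function.uncurry G) (σ.prod τ) :=
    .of_bound hG.aestronglyMeasurable C (.of_forall fun p =>
      le_of_tendsto' (hlim p.1 p.2).norm fun n => hC n p.1 p.2)
  simp only [integral_integral (hFint _), integral_integral hGint]
  exact tendsto_integral_of_dominated_convergence (fun _ => C)
    (fun n => (hF n).aestronglyMeasurable) (integrable_const C)
    (fun n => .of_forall fun p => hC n p.1 p.2) (.of_forall fun p => hlim p.1 p.2)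

lemma integral_cond_Icc {a b : ℝ} (hab : a ≤ b) (f : ℝ → E) :
    ∫ x, f x ∂volume[|Set.Icc a b] = (b - a)⁻¹ • ∫ x in a..b, f x := by
  rw [ProbabilityTheory.cond, integral_smul_measure, Real.volume_Icc, ENNReal.toReal_inv,
    ENNReal.toReal_ofReal (sub_nonneg.2 hab), integral_Icc_eq_integral_Ioc,
    ← intervalIntegral.integral_of_le hab]

lemma isProbabilityMeasure_cond_Icc {a b : ℝ} (hab : a < b) :
    IsProbabilityMeasure (volume[|Set.Icc a b]) :=
  ProbabilityTheory.cond_isProbabilityMeasure_of_finite (by simp [hab]) (by simp)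

lemma tendsto_inv_smul_integral_atTop [CompleteSpace E] {f : ℝ → E} {l : E} (hf : Continuous f)
    (hl : Tendsto f atTop (𝓝 l)) :
    Tendsto (fun N : ℝ => N⁻¹ • ∫ t in (0 : ℝ)..N, f t) atTop (𝓝 l) := by
  obtain ⟨C, hC⟩ := exists_norm_le_of_continuous_of_tendsto_atTop hf hl 0
  have hrescaled : Tendsto (fun N : ℝ => ∫ s in (0 : ℝ)..1, f (N * s)) atTop
      (𝓝 (∫ _ in (0 : ℝ)..1, l)) := by
    refine intervalIntegral.tendsto_integral_filter_of_dominated_convergence (fun _ => C)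
      (.of_forall fun N => (hf.comp (continuous_const_mul N)).aestronglyMeasurable) ?_ (by simp) ?_
    all_goals rw [Set.uIoc_of_le zero_le_one]
    · filter_upwards [eventually_ge_atTop 0] with N hN
      exact .of_forall fun s hs => hC _ (mul_nonneg hN hs.1.le)
    · exact .of_forall fun s hs => hl.comp (tendsto_id.atTop_mul_const hs.1)
  rw [intervalIntegral.integral_const, sub_zero, one_smul] at hrescaled
  refine hrescaled.congr' ?_
  filter_upwards [eventually_ne_atTop 0] with N hN
  rw [intervalIntegral.integral_comp_mul_left _ hN, mul_zero, mul_one]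

end Integrals

section PositiveDefinite

variable {K : ℝ → ℝ}

lemma IsPosDefKernel1.finset_sum_nonneg (hpd : IsPosDefKernel1 K) {ι : Type*} (s : Finset ι)
    (x c : ι → ℝ) : 0 ≤ ∑ i ∈ s, ∑ j ∈ s, c i * c j * K (x i - x j) := by
  have hsum (f : ι → ℝ) : ∑ i : Fin s.card, f (s.equivFin.symm i) = ∑ i ∈ s, f i :=
    (Equiv.sum_comp s.equivFin.symm fun i : s => f i).trans (Finset.sum_coe_sort s f)
  have h := hpd s.card (fun i => x (s.equivFin.symm i)) fun i => c (s.equivFin.symm i)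
  rw [hsum fun i => ∑ j : Fin s.card,
    c i * c (s.equivFin.symm j) * K (x i - x (s.equivFin.symm j))] at h
  exact h.trans_eq (Finset.sum_congr rfl fun i _ => hsum fun j => c i * c j * K (x i - x j))

lemma IsPosDefKernel1.abs_le_apply_zero (hpd : IsPosDefKernel1 K) (heven : ∀ x, K (-x) = K x)
    (x : ℝ) : |K x| ≤ K 0 := by
  have hplus := hpd 2 ![x, 0] ![1, 1]
  have hminus := hpd 2 ![x, 0] ![1, -1]
  simp only [Fin.sum_univ_two, Matrix.cons_val_zero, Matrix.cons_val_one, sub_self, sub_zero,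
    zero_sub, heven] at hplus hminus
  exact abs_le.2 ⟨by linarith, by linarith⟩

/-- The mutual energy `⟨σ, τ⟩ = ∫∫ K(x-y) dσ(x) dτ(y)`, the polarization of `energy1 K`. -/
noncomputable def mutualEnergy (K : ℝ → ℝ) (σ τ : Measure ℝ) : ℝ :=
  ∫ x, ∫ y, K (x - y) ∂τ ∂σ

lemma IsPosDefKernel1.two_mul_integral_simpleFunc_le (hpd : IsPosDefKernel1 K)
    (heven : ∀ x, K (-x) = K x) {Ω : Type*} [MeasurableSpace Ω] (φ : SimpleFunc Ω ℝ)
    (σ τ : Measure Ω) [IsFiniteMeasure σ] [IsFiniteMeasure τ] :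
    2 * ∫ x, ∫ y, K (φ x - φ y) ∂τ ∂σ ≤
      (∫ x, ∫ y, K (φ x - φ y) ∂σ ∂σ) + ∫ x, ∫ y, K (φ x - φ y) ∂τ ∂τ := by
  let m (μ : Measure Ω) (b : ℝ) : ℝ := μ.real (φ ⁻¹' {b})
  let Q (μ ν : Measure Ω) : ℝ := ∑ i ∈ φ.range, ∑ j ∈ φ.range, m μ i * m ν j * K (i - j)
  have hQ (μ ν : Measure Ω) [IsFiniteMeasure μ] [IsFiniteMeasure ν] :
      ∫ x, ∫ y, K (φ x - φ y) ∂ν ∂μ = Q μ ν := by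
    rw [integral_comp_simpleFunc φ μ fun z => ∫ y, K (z - φ y) ∂ν]
    refine Finset.sum_congr rfl fun i _ => ?_
    rw [integral_comp_simpleFunc φ ν fun z => K (i - z), smul_eq_mul, Finset.mul_sum]
    exact Finset.sum_congr rfl fun j _ => (mul_assoc _ _ _).symm
  have hsymm : Q τ σ = Q σ τ := by
    refine Finset.sum_comm.trans ?_
    refine Finset.sum_congr rfl fun i _ => Finset.sum_congr rfl fun j _ => ?_
    rw [← heven (i - j), neg_sub, mul_comm (m τ j)]
  have hexpand : ∑ i ∈ φ.range, ∑ j ∈ φ.range, (m σ i - m τ i) * (m σ j - m τ j) * K (i - j) =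
      Q σ σ - Q σ τ - Q τ σ + Q τ τ := by
    simp only [Q, ← Finset.sum_sub_distrib, ← Finset.sum_add_distrib]
    exact Finset.sum_congr rfl fun i _ => Finset.sum_congr rfl fun j _ => by ring
  have hnonneg := hpd.finset_sum_nonneg φ.range id fun b => m σ b - m τ b
  simp only [id_eq] at hnonneg
  rw [hQ, hQ, hQ]
  linarith

lemma tendsto_integral_comp_sub_mutualEnergy (hcont : Continuous K) {C : ℝ} (hC : ∀ x, |K x| ≤ C)
    {f : ℕ → ℝ → ℝ} (hmeas : ∀ n, Measurable (f n))
    (hlim : ∀ x, Tendsto (fun n => f n x) atTop (𝓝 x))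
    (σ τ : Measure ℝ) [IsFiniteMeasure σ] [IsFiniteMeasure τ] :
    Tendsto (fun n => ∫ x, ∫ y, K (f n x - f n y) ∂τ ∂σ) atTop (𝓝 (mutualEnergy K σ τ)) :=
  tendsto_integral_integral_of_norm_le_const C
    (fun n => (hcont.measurable.comp
      (((hmeas n).comp measurable_fst).sub ((hmeas n).comp measurable_snd))).stronglyMeasurable)
    (fun _ _ _ => hC _) fun x y => (hcont.tendsto _).comp ((hlim x).sub (hlim y))

lemma IsPosDefKernel1.two_mul_mutualEnergy_le (hpd : IsPosDefKernel1 K)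
    (heven : ∀ x, K (-x) = K x) (hcont : Continuous K) (σ τ : Measure ℝ) [IsFiniteMeasure σ]
    [IsFiniteMeasure τ] : 2 * mutualEnergy K σ τ ≤ energy1 K σ + energy1 K τ := by
  let φ : ℕ → SimpleFunc ℝ ℝ := SimpleFunc.approxOn id measurable_id Set.univ 0 (Set.mem_univ 0)
  have hφ (x : ℝ) : Tendsto (fun n => φ n x) atTop (𝓝 x) :=
    SimpleFunc.tendsto_approxOn measurable_id (Set.mem_univ 0) (by simp)
  have hlim (μ ν : Measure ℝ) [IsFiniteMeasure μ] [IsFiniteMeasure ν] :=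
    tendsto_integral_comp_sub_mutualEnergy hcont (hpd.abs_le_apply_zero heven)
      (fun n => (φ n).measurable) hφ μ ν
  exact le_of_tendsto_of_tendsto' ((hlim σ τ).const_mul 2) ((hlim σ σ).add (hlim τ τ))
    fun n => hpd.two_mul_integral_simpleFunc_le heven (φ n) σ τ

lemma IsPosDefKernel1.energy1_nonneg (hpd : IsPosDefKernel1 K) (heven : ∀ x, K (-x) = K x)
    (hcont : Continuous K) (μ : Measure ℝ) [IsFiniteMeasure μ] : 0 ≤ energy1 K μ := by
  simpa [mutualEnergy, energy1] using hpd.two_mul_mutualEnergy_le heven hcont μ 0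

lemma IsPosDefKernel1.le_energy1_of_le_potential (hpd : IsPosDefKernel1 K)
    (heven : ∀ x, K (-x) = K x) (hcont : Continuous K) (μ ν : Measure ℝ) [IsProbabilityMeasure μ]
    [IsFiniteMeasure ν] {c : ℝ} (hc : ∀ᵐ x ∂μ, c ≤ ∫ y, K (x - y) ∂ν) :
    2 * c - energy1 K ν ≤ energy1 K μ := by
  have hint : Integrable (fun p : ℝ × ℝ => K (p.1 - p.2)) (μ.prod ν) :=
    .of_bound (hcont.comp (continuous_fst.sub continuous_snd)).aestronglyMeasurable (K 0)
      (.of_forall fun _ => hpd.abs_le_apply_zero heven _)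
  have hmutual : c ≤ mutualEnergy K μ ν := by
    simpa [mutualEnergy] using integral_mono_ae (integrable_const c) hint.integral_prod_left hc
  linarith [hpd.two_mul_mutualEnergy_le heven hcont μ ν]

end PositiveDefinite

section UniformMeasure

variable {K : ℝ → ℝ}

/-- The primitive `t ↦ ∫ u in 0..t, K u` of `K` vanishing at `0`. -/
noncomputable def primitive (K : ℝ → ℝ) (t : ℝ) : ℝ := ∫ u in (0 : ℝ)..t, K u

lemma continuous_primitive (hcont : Continuous K) : Continuous (primitive K) :=
  intervalIntegral.continuous_primitive hcont.intervalIntegrable 0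

lemma primitive_neg (heven : ∀ x, K (-x) = K x) (t : ℝ) : primitive K (-t) = -primitive K t := by
  have hsub := intervalIntegral.integral_comp_neg (a := 0) (b := t) K
  simp only [heven, neg_zero] at hsub
  rw [primitive, primitive, hsub, intervalIntegral.integral_symm]

lemma potential_cond_Icc (heven : ∀ x, K (-x) = K x) (hcont : Continuous K) {a b : ℝ}
    (hab : a ≤ b) (x : ℝ) :
    ∫ y, K (x - y) ∂volume[|Set.Icc a b] =
      (b - a)⁻¹ * (primitive K (x - a) + primitive K (b - x)) := by
  rw [integral_cond_Icc hab, smul_eq_mul, intervalIntegral.integral_comp_sub_left,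
    ← neg_sub x b, primitive_neg heven, ← sub_eq_add_neg, primitive, primitive,
    intervalIntegral.integral_interval_sub_left] <;>
  exact hcont.intervalIntegrable _ _

lemma energy1_cond_Icc (heven : ∀ x, K (-x) = K x) (hcont : Continuous K) {a b : ℝ}
    (hab : a ≤ b) :
    energy1 K (volume[|Set.Icc a b]) =
      (b - a)⁻¹ * (2 * ((b - a)⁻¹ * ∫ t in (0 : ℝ)..(b - a), primitive K t)) := by
  have hP := continuous_primitive hcont
  have hleft : Continuous fun x => primitive K (x - a) := hP.comp (continuous_sub_right a)
  have hright : Continuous fun x => primitive K (b - x) := hP.comp (continuous_sub_left b)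
  simp only [energy1, potential_cond_Icc heven hcont hab]
  rw [integral_cond_Icc hab, smul_eq_mul, intervalIntegral.integral_const_mul,
    intervalIntegral.integral_add (hleft.intervalIntegrable a b) (hright.intervalIntegrable a b),
    intervalIntegral.integral_comp_sub_right, intervalIntegral.integral_comp_sub_left, sub_self,
    sub_self]
  ring

lemma tendsto_mul_energy1_cond_Icc (heven : ∀ x, K (-x) = K x) (hcont : Continuous K) {I : ℝ}
    (hI : Tendsto (primitive K) atTop (𝓝 I)) (M : ℝ) :
    Tendsto (fun R => R * energy1 K (volume[|Set.Icc (-M) (R + M)])) atTop (𝓝 (2 * I)) := by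
  have hmean := (tendsto_inv_smul_integral_atTop (continuous_primitive hcont) hI).comp
    (tendsto_atTop_add_const_right atTop (2 * M) tendsto_id)
  have hlim := (tendsto_div_add_const_atTop (2 * M)).mul (hmean.const_mul 2)
  rw [one_mul] at hlim
  refine hlim.congr' ?_
  filter_upwards [eventually_ge_atTop (-(2 * M))] with R hR
  have hlength : R + M - -M = R + 2 * M := by ring
  rw [energy1_cond_Icc heven hcont (by linarith), hlength, ← mul_assoc R, ← div_eq_mul_inv]
  rfl

end UniformMeasure

section MinimalEnergy

variable {K : ℝ → ℝ}

/-- The least energy of a Borel probability measure on `D`, i.e. the reciprocal of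
`capacity1 K D`. -/
noncomputable def minEnergy (K : ℝ → ℝ) (D : Set ℝ) : ℝ :=
  sInf {e : ℝ | ∃ μ : Measure ℝ, IsProbabilityMeasure μ ∧ μ Dᶜ = 0 ∧ e = energy1 K μ}

lemma IsPosDefKernel1.minEnergy_le (hpd : IsPosDefKernel1 K) (heven : ∀ x, K (-x) = K x)
    (hcont : Continuous K) {D : Set ℝ} (μ : Measure ℝ) [IsProbabilityMeasure μ] (hμ : μ Dᶜ = 0) :
    minEnergy K D ≤ energy1 K μ := by
  refine csInf_le ⟨0, ?_⟩ ⟨μ, inferInstance, hμ, rfl⟩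
  rintro _ ⟨ν, _, -, rfl⟩
  exact hpd.energy1_nonneg heven hcont ν

lemma le_minEnergy {D : Set ℝ} (hD : D.Nonempty) {c : ℝ}
    (hc : ∀ μ : Measure ℝ, IsProbabilityMeasure μ → (∀ᵐ x ∂μ, x ∈ D) → c ≤ energy1 K μ) :
    c ≤ minEnergy K D := by
  obtain ⟨x, hx⟩ := hD
  refine le_csInf ⟨_, Measure.dirac x, inferInstance, by simp [hx], rfl⟩ ?_
  rintro _ ⟨μ, hμ, hsupp, rfl⟩
  exact hc μ hμ (mem_ae_iff.2 hsupp)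

lemma IsPosDefKernel1.le_minEnergy_Icc (hpd : IsPosDefKernel1 K) (heven : ∀ x, K (-x) = K x)
    (hcont : Continuous K) {a b c M : ℝ} (hab : a ≤ b) (hM : 0 ≤ M)
    (hc : ∀ t, M ≤ t → c ≤ primitive K t) :
    2 * ((b - a + 2 * M)⁻¹ * (2 * c)) - energy1 K (volume[|Set.Icc (a - M) (b + M)]) ≤
      minEnergy K (Set.Icc a b) := by
  refine le_minEnergy (Set.nonempty_Icc.2 hab) fun μ _ hμ =>
    hpd.le_energy1_of_le_potential heven hcont μ _ ?_
  filter_upwards [hμ] with x hx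
  have hlength : b + M - (a - M) = b - a + 2 * M := by ring
  rw [potential_cond_Icc heven hcont (by linarith), hlength, two_mul c]
  refine mul_le_mul_of_nonneg_left (add_le_add ?_ ?_) (inv_nonneg.2 (by linarith))
  · exact hc _ (by linarith [hx.1])
  · exact hc _ (by linarith [hx.2])

lemma IsPosDefKernel1.eventually_lt_mul_minEnergy (hpd : IsPosDefKernel1 K)
    (heven : ∀ x, K (-x) = K x) (hcont : Continuous K) {I : ℝ}
    (hI : Tendsto (primitive K) atTop (𝓝 I)) {e : ℝ} (he : e < 2 * I) :
    ∀ᶠ R in atTop, e < R * minEnergy K (Set.Icc 0 R) := by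
  obtain ⟨c, hec, hcI⟩ : ∃ c, (e + 2 * I) / 4 < c ∧ c < I := exists_between (by linarith)
  obtain ⟨M, hM, hc⟩ : ∃ M, 0 ≤ M ∧ ∀ t, M ≤ t → c ≤ primitive K t :=
    ((eventually_ge_atTop 0).and
      (eventually_forall_ge_atTop.2 (hI.eventually_const_le hcI))).exists
  have hlim := ((tendsto_div_add_const_atTop (2 * M)).const_mul (4 * c)).sub
    (tendsto_mul_energy1_cond_Icc heven hcont hI M)
  filter_upwards [hlim.eventually_const_lt (show e < 4 * c * 1 - 2 * I by linarith),
    eventually_ge_atTop 0] with R hR hR0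
  refine hR.trans_le ?_
  calc 4 * c * (R / (R + 2 * M)) - R * energy1 K (volume[|Set.Icc (-M) (R + M)])
      = R * (2 * ((R - 0 + 2 * M)⁻¹ * (2 * c))
          - energy1 K (volume[|Set.Icc (0 - M) (R + M)])) := by
        rw [sub_zero, zero_sub]
        ring
    _ ≤ R * minEnergy K (Set.Icc 0 R) := by
      gcongr
      exact hpd.le_minEnergy_Icc heven hcont hR0 hM hc

lemma IsPosDefKernel1.tendsto_mul_minEnergy (hpd : IsPosDefKernel1 K)
    (heven : ∀ x, K (-x) = K x) (hcont : Continuous K) {I : ℝ}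
    (hI : Tendsto (primitive K) atTop (𝓝 I)) :
    Tendsto (fun R => R * minEnergy K (Set.Icc 0 R)) atTop (𝓝 (2 * I)) := by
  have huniform : Tendsto (fun R => R * energy1 K (volume[|Set.Icc 0 R])) atTop (𝓝 (2 * I)) := by
    simpa only [neg_zero, add_zero] using tendsto_mul_energy1_cond_Icc heven hcont hI 0
  refine tendsto_order.2 ⟨fun e he => hpd.eventually_lt_mul_minEnergy heven hcont hI he,
    fun e he => ?_⟩
  filter_upwards [huniform.eventually_lt_const he, eventually_gt_atTop 0] with R hRe hR
  have := isProbabilityMeasure_cond_Icc hR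
  refine (mul_le_mul_of_nonneg_left ?_ hR.le).trans_lt hRe
  exact hpd.minEnergy_le heven hcont _ (by simp [ProbabilityTheory.cond])

end MinimalEnergy

theorem statement7_general {K : ℝ → ℝ} (heven : ∀ x, K (-x) = K x) (hcont : Continuous K)
    (hpd : IsPosDefKernel1 K) {I : ℝ} (hpos : 0 < I)
    (hI : Tendsto (fun t => ∫ u in (0 : ℝ)..t, K u) atTop (𝓝 I)) :
    Tendsto (fun R => capacity1 K (Set.Icc 0 R) / (R / (2 * I))) atTop (𝓝 1) := by
  have h2I : 2 * I ≠ 0 := (mul_pos two_pos hpos).ne'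
  have hlim : Tendsto (fun R => 2 * I / (R * minEnergy K (Set.Icc 0 R))) atTop
      (𝓝 (2 * I / (2 * I))) :=
    tendsto_const_nhds.div (hpd.tendsto_mul_minEnergy heven hcont hI) h2I
  rw [div_self h2I] at hlim
  refine hlim.congr fun R => ?_
  rw [capacity1, ← minEnergy, inv_eq_one_div, div_div_div_eq, one_mul, mul_comm R]

/-- if `K : ℝ → ℝ` is even, continuous, positive definite, regularly varying
with index `α > 1`, and `∫₀^∞ K(x) dx > 0`, then `Cap_K([0,R]) ∼ R / (2 ∫₀^∞ K(x) dx)` as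
`R → ∞`. -/
theorem statement7 (K : ℝ → ℝ) (heven : ∀ x, K (-x) = K x)
    (hcont : Continuous K) (hpd : IsPosDefKernel1 K)
    (α : ℝ) (hα : 1 < α) (hrv : RegularlyVarying K α)
    (hpos : 0 < ∫ x in Set.Ioi (0:ℝ), K x) :
    Tendsto (fun R =>
        capacity1 K (Set.Icc 0 R) / (R / (2 * ∫ x in Set.Ioi (0:ℝ), K x)))
      atTop (nhds 1) := by
  have hint : IntegrableOn K (Set.Ioi 0) := .of_integral_ne_zero hpos.ne'
  exact statement7_general heven hcont hpd hpos
    (intervalIntegral_tendsto_integral_Ioi 0 hint tendsto_id)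
end
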